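/- arXiv:1308.0838 — 2 statements merged into one kernel-verified Lean document; each statement's English description precedes it below -/
import Mathlib

section
/- For every prime p, the Haar measures of the double cosets satisfy μ_p(K_p(1,0,0)) = p² + p + 1 and μ_p(K_p(1,0,−1)) = (p² + p)(p² + p + 1). -/
open MeasureTheory

noncomputable section

variable (p : ℕ) [Fact p.Prime]

/-- The diagonal element `diag(p^a, p^b, p^c)` of `GL₃(ℚ_p)`. -/
def padicDiag (a b c : ℤ) : GL (Fin 3) ℚ_[p] := by
  have hp : (p : ℚ_[p]) ≠ 0 := by
    exact_mod_cast (Nat.cast_ne_zero (R := ℚ_[p])).mpr (Fact.out : p.Prime).ne_zero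
  refine ⟨Matrix.diagonal ![(p : ℚ_[p]) ^ a, (p : ℚ_[p]) ^ b, (p : ℚ_[p]) ^ c],
    Matrix.diagonal ![(p : ℚ_[p]) ^ (-a), (p : ℚ_[p]) ^ (-b), (p : ℚ_[p]) ^ (-c)], ?_, ?_⟩ <;>
  · rw [Matrix.diagonal_mul_diagonal]
    ext i j
    fin_cases i <;> fin_cases j <;>
      simp [zpow_neg, mul_inv_cancel₀ (zpow_ne_zero _ hp), inv_mul_cancel₀ (zpow_ne_zero _ hp)]

/-- `K_p = GL₃(ℤ_p)`, viewed as the image of `GL₃(ℤ_p)` inside `GL₃(ℚ_p)`. -/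
def padicK : Set (GL (Fin 3) ℚ_[p]) :=
  Set.range fun u : (Matrix (Fin 3) (Fin 3) ℤ_[p])ˣ =>
    Units.map (RingHom.toMonoidHom (RingHom.mapMatrix (PadicInt.Coe.ringHom (p := p)))) u

/-- The double coset `K_p · diag(p^a, p^b, p^c) · K_p`. -/
def padicDoubleCoset (a b c : ℤ) : Set (GL (Fin 3) ℚ_[p]) :=
  {x | ∃ k₁ ∈ padicK p, ∃ k₂ ∈ padicK p, x = k₁ * padicDiag p a b c * k₂}

/-- `Φ_p(a,b,c)`: the characteristic function of `K_p(a,b,c)`. -/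
def padicPhi (a b c : ℤ) : GL (Fin 3) ℚ_[p] → ℝ :=
  (padicDoubleCoset p a b c).indicator fun _ => (1 : ℝ)

instance : MeasurableSpace (GL (Fin 3) ℚ_[p]) := borel _

/-- Convolution of functions on `GL₃(ℚ_p)` with respect to a measure `μ`. -/
def padicConv (μ : Measure (GL (Fin 3) ℚ_[p])) (f h : GL (Fin 3) ℚ_[p] → ℝ) :
    GL (Fin 3) ℚ_[p] → ℝ :=
  fun x => ∫ y, f y * h (y⁻¹ * x) ∂μ

instance : BorelSpace (GL (Fin 3) ℚ_[p]) := ⟨rfl⟩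

/-- The inclusion of `GL₃(ℤ_p)` into `GL₃(ℚ_p)`. -/
def incl : GL (Fin 3) ℤ_[p] →* GL (Fin 3) ℚ_[p] :=
  Units.map (RingHom.toMonoidHom (RingHom.mapMatrix (PadicInt.Coe.ringHom (p := p))))

lemma padicK_eq : padicK p = ((incl p).range : Set (GL (Fin 3) ℚ_[p])) := rfl

lemma incl_apply (k : GL (Fin 3) ℤ_[p]) (i j : Fin 3) :
    (incl p k).1 i j = ((k.1 i j : ℤ_[p]) : ℚ_[p]) := rfl

lemma mem_K (x : GL (Fin 3) ℚ_[p]) :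
    x ∈ padicK p ↔ (∀ i j, ‖x.1 i j‖ ≤ 1) ∧ ‖x.1.det‖ = 1 := by
  constructor
  · rintro ⟨k, rfl⟩
    refine ⟨fun i j => PadicInt.norm_le_one (k.1 i j), ?_⟩
    have h : ((incl p k).1).det = ((k.1.det : ℤ_[p]) : ℚ_[p]) :=
      ((PadicInt.Coe.ringHom (p := p)).map_det k.1).symm
    change ‖((incl p k).1).det‖ = 1
    rw [h]
    have : IsUnit k.1.det := (Matrix.isUnit_iff_isUnit_det _).1 k.isUnit
    exact PadicInt.isUnit_iff.1 this
  · rintro ⟨h1, h2⟩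
    let M : Matrix (Fin 3) (Fin 3) ℤ_[p] := fun i j => ⟨x.1 i j, h1 i j⟩
    have hM : (PadicInt.Coe.ringHom (p := p)).mapMatrix M = x.1 := rfl
    have hd : IsUnit M.det := by
      rw [PadicInt.isUnit_iff]
      have := (PadicInt.Coe.ringHom (p := p)).map_det M
      rw [hM] at this
      rw [← h2, ← this]; rfl
    obtain ⟨u, hu⟩ := (Matrix.isUnit_iff_isUnit_det _).2 hd
    refine ⟨u, Units.ext ?_⟩
    change (PadicInt.Coe.ringHom (p := p)).mapMatrix u.1 = x.1
    rw [hu, hM]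

lemma K_closed : IsClosed (padicK p) := by
  have : padicK p = (⋂ i, ⋂ j, {x : GL (Fin 3) ℚ_[p] | ‖x.1 i j‖ ≤ 1}) ∩
      {x : GL (Fin 3) ℚ_[p] | ‖x.1.det‖ = 1} := by
    ext x; rw [mem_K]; simp
  rw [this]
  have hc : Continuous fun x : GL (Fin 3) ℚ_[p] => x.1 := Units.continuous_val
  refine IsClosed.inter (isClosed_iInter fun i => isClosed_iInter fun j => ?_) ?_
  · exact isClosed_le (hc.matrix_elem i j).norm continuous_const
  · exact isClosed_eq hc.matrix_det.norm continuous_const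

/-- The stabilizer in `GL₃(ℤ_p)` of the coset `diag(p^a,p^b,p^c) K_p`. -/
def stab (a b c : ℤ) : Subgroup (GL (Fin 3) ℤ_[p]) :=
  ((incl p).range.comap (MulAut.conj (padicDiag p a b c)⁻¹).toMonoidHom).comap (incl p)

lemma mem_stab (a b c : ℤ) (k : GL (Fin 3) ℤ_[p]) :
    k ∈ stab p a b c ↔
      (padicDiag p a b c)⁻¹ * incl p k * padicDiag p a b c ∈ (incl p).range := by
  simp [stab, Subgroup.mem_comap]

lemma mem_stab_iff (a b c : ℤ) (k : GL (Fin 3) ℤ_[p]) :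
    k ∈ stab p a b c ↔ ∀ i j, ‖(p : ℚ_[p]) ^ (-(![a, b, c] i)) * (k.1 i j : ℚ_[p]) *
      (p : ℚ_[p]) ^ (![a, b, c] j)‖ ≤ 1 := by
  rw [mem_stab, ← SetLike.mem_coe, ← padicK_eq, mem_K]
  have h : ∀ i j, ((padicDiag p a b c)⁻¹ * incl p k * padicDiag p a b c).1 i j =
      (p : ℚ_[p]) ^ (-(![a, b, c] i)) * (k.1 i j : ℚ_[p]) * (p : ℚ_[p]) ^ (![a, b, c] j) := by
    intro i j
    have h1 : (padicDiag p a b c).1 = Matrix.diagonal fun i => (p : ℚ_[p]) ^ (![a, b, c] i) := by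
      ext i j; fin_cases i <;> fin_cases j <;> simp [padicDiag]
    have h2 : ((padicDiag p a b c)⁻¹).1 =
        Matrix.diagonal fun i => (p : ℚ_[p]) ^ (-(![a, b, c] i)) := by
      change Matrix.diagonal _ = _
      ext i j; fin_cases i <;> fin_cases j <;> simp
    rw [Units.val_mul, Units.val_mul, h1, h2, Matrix.mul_diagonal, Matrix.diagonal_mul, incl_apply]
  have hd : ‖((padicDiag p a b c)⁻¹ * incl p k * padicDiag p a b c).1.det‖ = 1 := by
    have := ((mem_K p (incl p k)).1 ⟨k, rfl⟩).2
    rw [Units.val_mul, Units.val_mul, Matrix.det_mul, Matrix.det_mul, mul_right_comm,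
      ← Matrix.det_mul, ← Units.val_mul, inv_mul_cancel]
    simpa using this
  simp only [hd, and_true, h]

lemma measure_dc (μ : Measure (GL (Fin 3) ℚ_[p])) [μ.IsHaarMeasure]
    (hμ : μ (padicK p) = 1) (a b c : ℤ) (hf : (stab p a b c).index ≠ 0) :
    μ (padicDoubleCoset p a b c) = (stab p a b c).index := by
  set g := padicDiag p a b c with hg
  have : (stab p a b c).FiniteIndex := ⟨hf⟩
  let r : GL (Fin 3) ℤ_[p] ⧸ stab p a b c → GL (Fin 3) ℚ_[p] := fun q => incl p q.out * g
  let S : GL (Fin 3) ℤ_[p] ⧸ stab p a b c → Set (GL (Fin 3) ℚ_[p]) :=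
    fun q => (fun x => (r q)⁻¹ * x) ⁻¹' padicK p
  have hU : padicDoubleCoset p a b c = ⋃ q, S q := by
    ext x
    simp only [Set.mem_iUnion]
    constructor
    · rintro ⟨_, ⟨k₁, rfl⟩, _, ⟨k₂, rfl⟩, rfl⟩
      refine ⟨(k₁ : GL (Fin 3) ℤ_[p] ⧸ stab p a b c), ?_⟩
      set q := (k₁ : GL (Fin 3) ℤ_[p] ⧸ stab p a b c)
      have h : q.out⁻¹ * k₁ ∈ stab p a b c :=
        QuotientGroup.eq.1 (QuotientGroup.out_eq' q)
      rw [mem_stab] at h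
      have h3 : (r q)⁻¹ * (incl p k₁ * g * incl p k₂) =
          (g⁻¹ * incl p (q.out⁻¹ * k₁) * g) * incl p k₂ := by
        simp only [r, map_mul, map_inv]; group
      change (r q)⁻¹ * (incl p k₁ * g * incl p k₂) ∈ (incl p).range
      rw [h3]
      exact mul_mem h ⟨k₂, rfl⟩
    · rintro ⟨q, k₂, hk⟩
      refine ⟨incl p q.out, ⟨_, rfl⟩, incl p k₂, ⟨_, rfl⟩, ?_⟩
      change incl p k₂ = (r q)⁻¹ * x at hk
      rw [hk]; simp only [r, ← hg]; group
  have hdis : Pairwise (Function.onFun Disjoint S) := by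
    intro q q' hne
    refine Set.disjoint_left.2 fun x hx hx' => hne ?_
    rw [← QuotientGroup.out_eq' q, ← QuotientGroup.out_eq' q']
    refine QuotientGroup.eq.2 ?_
    rw [mem_stab]
    have h1 : (r q)⁻¹ * x ∈ (incl p).range := hx
    have h2 : (r q')⁻¹ * x ∈ (incl p).range := hx'
    have := mul_mem h1 (inv_mem h2)
    convert this using 1
    simp only [r, map_mul, map_inv]; group
    simp [hg]
  have hm : ∀ q, MeasurableSet (S q) := fun q =>
    ((K_closed p).preimage (continuous_const_mul _)).measurableSet
  have : Fintype (GL (Fin 3) ℤ_[p] ⧸ stab p a b c) := Fintype.ofFinite _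
  rw [hU, measure_iUnion hdis hm, tsum_fintype]
  simp only [S, measure_preimage_mul, hμ]
  simp [Subgroup.index, Nat.card_eq_fintype_card]

lemma index_of_fun {G X : Type*} [Group G] (H : Subgroup G) (f : G → X)
    (hs : Function.Surjective f) (hf : ∀ a b, f a = f b ↔ a * b⁻¹ ∈ H) :
    H.index = Nat.card X := by
  rw [Subgroup.index]
  refine Nat.card_congr (Equiv.ofBijective
    (Quotient.lift (s := QuotientGroup.leftRel H) (fun g => f g⁻¹) ?_) ⟨?_, ?_⟩)
  · intro a b h
    rw [hf]
    simpa using QuotientGroup.leftRel_apply.1 h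
  · intro x y
    induction x using Quotient.inductionOn
    induction y using Quotient.inductionOn
    rename_i a b
    intro h
    refine Quotient.sound (QuotientGroup.leftRel_apply.2 ?_)
    simpa using (hf _ _).1 h
  · intro x
    obtain ⟨g, hg⟩ := hs x
    exact ⟨Quotient.mk _ g⁻¹, by simpa using hg⟩

lemma dvd_iff (x : ℤ_[p]) : (p : ℤ_[p]) ∣ x ↔ PadicInt.toZMod x = 0 := by
  rw [← RingHom.mem_ker, PadicInt.ker_toZMod, PadicInt.maximalIdeal_eq_span_p,
    Ideal.mem_span_singleton]

lemma norm_dvd (x : ℤ_[p]) (n : ℕ) :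
    ‖(p : ℚ_[p]) ^ (-(n : ℤ)) * (x : ℚ_[p])‖ ≤ 1 ↔ (p : ℤ_[p]) ^ n ∣ x := by
  rw [← Ideal.mem_span_singleton, ← PadicInt.norm_le_pow_iff_mem_span_pow, norm_mul,
    Padic.norm_p_zpow, neg_neg, PadicInt.norm_def, zpow_neg]
  have hp : (0 : ℝ) < (p : ℝ) ^ (n : ℤ) := zpow_pos (by exact_mod_cast (Fact.out : p.Prime).pos) _
  rw [← one_div, le_div_iff₀ hp, mul_comm]

lemma norm_p_mul (x : ℤ_[p]) (n : ℕ) : ‖(p : ℚ_[p]) ^ n * (x : ℚ_[p])‖ ≤ 1 := by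
  have := PadicInt.norm_le_one ((p : ℤ_[p]) ^ n * x)
  rw [PadicInt.norm_def] at this
  simpa using this

lemma mem_stab100 (k : GL (Fin 3) ℤ_[p]) : k ∈ stab p 1 0 0 ↔
    PadicInt.toZMod (k.1 0 1) = 0 ∧ PadicInt.toZMod (k.1 0 2) = 0 := by
  have hp : (p : ℚ_[p]) ≠ 0 := by exact_mod_cast (Fact.out : p.Prime).ne_zero
  rw [mem_stab_iff, ← dvd_iff, ← dvd_iff]
  have h1 := fun x => norm_dvd p x 1
  have h2 := fun x => norm_p_mul p x 1
  have h3 := fun x : ℤ_[p] => PadicInt.norm_le_one x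
  simp only [Nat.cast_one, pow_one, zpow_neg, zpow_one] at h1 h2
  simp only [Fin.forall_fin_succ, IsEmpty.forall_iff]
  simp [-norm_mul, h1, h3, mul_comm _ (p : ℚ_[p]), h2, hp]

lemma mem_stab110 (k : GL (Fin 3) ℤ_[p]) : k ∈ stab p 1 1 0 ↔
    PadicInt.toZMod (k.1 0 2) = 0 ∧ PadicInt.toZMod (k.1 1 2) = 0 := by
  have hp : (p : ℚ_[p]) ≠ 0 := by exact_mod_cast (Fact.out : p.Prime).ne_zero
  rw [mem_stab_iff, ← dvd_iff, ← dvd_iff]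
  have h1 := fun x => norm_dvd p x 1
  have h2 := fun x => norm_p_mul p x 1
  have h3 := fun x : ℤ_[p] => PadicInt.norm_le_one x
  simp only [Nat.cast_one, pow_one, zpow_neg, zpow_one] at h1 h2
  simp only [Fin.forall_fin_succ, IsEmpty.forall_iff]
  simp [-norm_mul, h1, h3, mul_comm _ (p : ℚ_[p]), h2, hp]

lemma mem_stab10 (k : GL (Fin 3) ℤ_[p]) : k ∈ stab p 1 0 (-1) ↔
    PadicInt.toZMod (k.1 0 1) = 0 ∧ (p : ℤ_[p]) ^ 2 ∣ k.1 0 2 ∧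
      PadicInt.toZMod (k.1 1 2) = 0 := by
  have hp : (p : ℚ_[p]) ≠ 0 := by exact_mod_cast (Fact.out : p.Prime).ne_zero
  rw [mem_stab_iff, ← dvd_iff, ← dvd_iff]
  have h1 := fun x => norm_dvd p x 1
  have h2 := fun x => norm_p_mul p x 1
  have h4 := fun x => norm_dvd p x 2
  have h5 := fun x => norm_p_mul p x 2
  have h3 := fun x : ℤ_[p] => PadicInt.norm_le_one x
  simp only [Nat.cast_one, pow_one, zpow_neg, zpow_one] at h1 h2
  have e1 : ∀ x : ℚ_[p], (p : ℚ_[p]) * (p * x) = p ^ 2 * x := fun x => by ring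
  have e2 : ∀ x : ℚ_[p], (p : ℚ_[p])⁻¹ * ((p : ℚ_[p])⁻¹ * x) = (p : ℚ_[p]) ^ (-((2 : ℕ) : ℤ)) * x :=
    fun x => by rw [zpow_neg, zpow_natCast, ← mul_assoc, ← mul_inv, pow_two]
  simp only [Fin.forall_fin_succ, IsEmpty.forall_iff]
  simp [-norm_mul, h1, h3, mul_comm _ (p : ℚ_[p]), mul_comm _ (p : ℚ_[p])⁻¹, h2, hp, e1, h5]
  rw [e2, h4]
  tauto


lemma isUnit_iff_red (x : ℤ_[p]) : IsUnit x ↔ PadicInt.toZMod x ≠ 0 := by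
  rw [Ne, ← RingHom.mem_ker, PadicInt.ker_toZMod, IsLocalRing.mem_maximalIdeal, mem_nonunits_iff,
    not_not]

lemma red_surj : Function.Surjective (PadicInt.toZMod : ℤ_[p] →+* ZMod p) :=
  ZMod.ringHom_surjective PadicInt.toZMod

lemma exists_GL (M : Matrix (Fin 3) (Fin 3) ℤ_[p]) (h : PadicInt.toZMod M.det ≠ 0) :
    ∃ k : GL (Fin 3) ℤ_[p], k.1 = M :=
  (Matrix.isUnit_iff_isUnit_det _).2 ((isUnit_iff_red p _).2 h)

lemma red_det (k : GL (Fin 3) ℤ_[p]) : PadicInt.toZMod k.1.det ≠ 0 :=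
  (isUnit_iff_red p _).1 ((Matrix.isUnit_iff_isUnit_det _).1 k.isUnit)

lemma mul_entry (a b : GL (Fin 3) ℤ_[p]) (i j : Fin 3) :
    a.1 i j = (a * b⁻¹).1 i 0 * b.1 0 j + (a * b⁻¹).1 i 1 * b.1 1 j +
      (a * b⁻¹).1 i 2 * b.1 2 j := by
  have : a.1 = (a * b⁻¹).1 * b.1 := by rw [← Units.val_mul]; simp
  conv_lhs => rw [this]
  rw [Matrix.mul_apply, Fin.sum_univ_three]

lemma index100 : (stab p 1 0 0).index = p ^ 2 + p + 1 := by
  let v : GL (Fin 3) ℤ_[p] → Fin 3 → ZMod p := fun k j => PadicInt.toZMod (k.1 0 j)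
  have hv : ∀ k, v k ≠ 0 := by
    intro k h
    apply red_det p k
    have h0 : PadicInt.toZMod (k.1 0 0) = 0 := congrFun h 0
    have h1 : PadicInt.toZMod (k.1 0 1) = 0 := congrFun h 1
    have h2 : PadicInt.toZMod (k.1 0 2) = 0 := congrFun h 2
    rw [Matrix.det_fin_three]
    simp [h0, h1, h2]
  rw [index_of_fun (stab p 1 0 0) (fun k => Projectivization.mk (ZMod p) (v k) (hv k))]
  · rw [Projectivization.card_of_finrank (ZMod p) (Fin 3 → ZMod p) (n := 3)]
    · simp [Finset.sum_range_succ]; ring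
    · simp
  · intro x
    induction x using Projectivization.ind with
    | h w hw =>
    choose s hs using red_surj p
    have : ∃ k : GL (Fin 3) ℤ_[p], ∀ j, k.1 0 j = s (w j) := by
      by_cases h0 : w 0 = 0
      · by_cases h1 : w 1 = 0
        · have h2 : w 2 ≠ 0 := by
            intro h2; apply hw; ext j; fin_cases j <;> simp [h0, h1, h2]
          obtain ⟨k, hk⟩ := exists_GL p !![s (w 0), s (w 1), s (w 2); 1, 0, 0; 0, 1, 0]
            (by rw [Matrix.det_fin_three]; simp [hs, h0, h1, h2])
          exact ⟨k, fun j => by rw [hk]; fin_cases j <;> simp⟩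
        · obtain ⟨k, hk⟩ := exists_GL p !![s (w 0), s (w 1), s (w 2); 1, 0, 0; 0, 0, 1]
            (by rw [Matrix.det_fin_three]; simp [hs, h0, h1])
          exact ⟨k, fun j => by rw [hk]; fin_cases j <;> simp⟩
      · obtain ⟨k, hk⟩ := exists_GL p !![s (w 0), s (w 1), s (w 2); 0, 1, 0; 0, 0, 1]
          (by rw [Matrix.det_fin_three]; simp [hs, h0])
        exact ⟨k, fun j => by rw [hk]; fin_cases j <;> simp⟩
    obtain ⟨k, hk⟩ := this
    refine ⟨k, ?_⟩
    have : v k = w := by ext j; simp [v, hk, hs]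
    simp [this]
  · intro a b
    rw [Projectivization.mk_eq_mk_iff', mem_stab100]
    constructor
    · rintro ⟨u, hu⟩
      have hba : ∀ j, (a * b⁻¹).1 0 j = a.1 0 0 * (b⁻¹).1 0 j + a.1 0 1 * (b⁻¹).1 1 j +
          a.1 0 2 * (b⁻¹).1 2 j := by
        intro j; rw [Units.val_mul, Matrix.mul_apply, Fin.sum_univ_three]
      have hbb : ∀ j, (1 : Matrix (Fin 3) (Fin 3) ℤ_[p]) 0 j = b.1 0 0 * (b⁻¹).1 0 j +
          b.1 0 1 * (b⁻¹).1 1 j + b.1 0 2 * (b⁻¹).1 2 j := by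
        intro j; rw [← Units.val_one, ← mul_inv_cancel b, Units.val_mul, Matrix.mul_apply,
          Fin.sum_univ_three]
      have key : ∀ j, PadicInt.toZMod ((a * b⁻¹).1 0 j) =
          u * PadicInt.toZMod ((1 : Matrix (Fin 3) (Fin 3) ℤ_[p]) 0 j) := by
        intro j
        rw [hba, hbb]
        have e : ∀ j, PadicInt.toZMod (a.1 0 j) = u * PadicInt.toZMod (b.1 0 j) :=
          fun j => (congrFun hu j).symm
        simp only [map_add, map_mul, e]; ring
      exact ⟨by rw [key]; simp, by rw [key]; simp⟩
    · rintro ⟨h1, h2⟩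
      refine ⟨PadicInt.toZMod ((a * b⁻¹).1 0 0), ?_⟩
      ext j
      simp only [v, Pi.smul_apply, smul_eq_mul]
      rw [mul_entry p a b 0 j]
      rw [map_add, map_add, map_mul, map_mul, map_mul, h1, h2, zero_mul, zero_mul, add_zero, add_zero]

lemma index110 : (stab p 1 1 0).relIndex (stab p 1 0 0) = p + 1 := by
  let v : stab p 1 0 0 → Fin 2 → ZMod p :=
    fun k => ![PadicInt.toZMod (k.1.1 1 1), PadicInt.toZMod (k.1.1 1 2)]
  have hdet : ∀ k : stab p 1 0 0, PadicInt.toZMod (k.1.1 1 1) * PadicInt.toZMod (k.1.1 2 2) -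
      PadicInt.toZMod (k.1.1 1 2) * PadicInt.toZMod (k.1.1 2 1) ≠ 0 := by
    intro k h
    apply red_det p k
    obtain ⟨h1, h2⟩ := (mem_stab100 p k.1).1 k.2
    rw [Matrix.det_fin_three]
    simp only [map_add, map_sub, map_mul, h1, h2]
    linear_combination PadicInt.toZMod (k.1.1 0 0) * h
  have hv : ∀ k, v k ≠ 0 := by
    intro k h
    apply hdet k
    have h0 : PadicInt.toZMod (k.1.1 1 1) = 0 := congrFun h 0
    have h1 : PadicInt.toZMod (k.1.1 1 2) = 0 := congrFun h 1
    simp [h0, h1]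
  rw [Subgroup.relIndex, index_of_fun _ (fun k => Projectivization.mk (ZMod p) (v k) (hv k))]
  · rw [Projectivization.card_of_finrank_two] <;> simp
  · intro x
    induction x using Projectivization.ind with
    | h w hw =>
    choose s hs using red_surj p
    have : ∃ k : GL (Fin 3) ℤ_[p], k.1 0 1 = 0 ∧ k.1 0 2 = 0 ∧ k.1 1 1 = s (w 0) ∧
        k.1 1 2 = s (w 1) := by
      by_cases h0 : w 0 = 0
      · have h1 : w 1 ≠ 0 := by
          intro h1; apply hw; ext j; fin_cases j <;> simp [h0, h1]
        obtain ⟨k, hk⟩ := exists_GL p !![1, 0, 0; 0, s (w 0), s (w 1); 0, 1, 0]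
          (by rw [Matrix.det_fin_three]; simp [hs, h0, h1])
        exact ⟨k, by rw [hk]; simp⟩
      · obtain ⟨k, hk⟩ := exists_GL p !![1, 0, 0; 0, s (w 0), s (w 1); 0, 0, 1]
          (by rw [Matrix.det_fin_three]; simp [hs, h0])
        exact ⟨k, by rw [hk]; simp⟩
    obtain ⟨k, k1, k2, k3, k4⟩ := this
    refine ⟨⟨k, (mem_stab100 p k).2 (by simp [k1, k2])⟩, ?_⟩
    have : v ⟨k, (mem_stab100 p k).2 (by simp [k1, k2])⟩ = w := by
      ext j; fin_cases j <;> simp [v, k3, k4, hs]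
    simp [this]
  · intro a b
    obtain ⟨hb1, hb2⟩ := (mem_stab100 p b.1).1 b.2
    obtain ⟨hc1, hc2⟩ := (mem_stab100 p (a * b⁻¹).1).1 (a * b⁻¹).2
    have e1 := congrArg PadicInt.toZMod (mul_entry p a b 1 1)
    have e2 := congrArg PadicInt.toZMod (mul_entry p a b 1 2)
    have hd := hdet b
    simp only [map_add, map_mul, hb1, hb2, mul_zero, zero_add] at e1 e2
    rw [Projectivization.mk_eq_mk_iff', Subgroup.mem_subgroupOf, mem_stab110]
    change _ ↔ PadicInt.toZMod ((a.1 * b.1⁻¹).1 0 2) = 0 ∧ PadicInt.toZMod ((a.1 * b.1⁻¹).1 1 2) = 0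
    change PadicInt.toZMod ((a.1 * b.1⁻¹).1 0 2) = 0 at hc2
    generalize (a.1 * b.1⁻¹).1 = c at *
    constructor
    · rintro ⟨u, hu⟩
      have u1 : u * PadicInt.toZMod (b.1.1 1 1) = PadicInt.toZMod (a.1.1 1 1) := congrFun hu 0
      have u2 : u * PadicInt.toZMod (b.1.1 1 2) = PadicInt.toZMod (a.1.1 1 2) := congrFun hu 1
      refine ⟨hc2, ?_⟩
      refine (mul_eq_zero.1 ?_).resolve_right hd
      linear_combination PadicInt.toZMod (b.1.1 1 1) * (-u2 - e2) +
        PadicInt.toZMod (b.1.1 1 2) * (u1 + e1)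
    · rintro ⟨-, h⟩
      refine ⟨PadicInt.toZMod (c 1 1), ?_⟩
      ext j
      fin_cases j
      · simp [v, e1, h]
      · simp [v, e2, h]

lemma index10 : (stab p 1 0 (-1)).relIndex (stab p 1 1 0 ⊓ stab p 1 0 0) = p := by
  have hp : (p : ℤ_[p]) ≠ 0 := by exact_mod_cast (Fact.out : p.Prime).ne_zero
  have hdiv : ∀ x : ℤ_[p], ∃ y, PadicInt.toZMod x = 0 → x = p * y := by
    intro x
    by_cases h : PadicInt.toZMod x = 0
    · obtain ⟨y, hy⟩ := (dvd_iff p x).2 h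
      exact ⟨y, fun _ => hy⟩
    · exact ⟨0, fun h' => absurd h' h⟩
  choose d hd using hdiv
  set H := stab p 1 1 0 ⊓ stab p 1 0 0 with hH
  have hmem : ∀ k : GL (Fin 3) ℤ_[p], k ∈ H ↔ PadicInt.toZMod (k.1 0 1) = 0 ∧
      PadicInt.toZMod (k.1 0 2) = 0 ∧ PadicInt.toZMod (k.1 1 2) = 0 := by
    intro k
    rw [hH, Subgroup.mem_inf, mem_stab100, mem_stab110]; tauto
  have hdiag : ∀ k ∈ H, PadicInt.toZMod (k.1 0 0) ≠ 0 ∧ PadicInt.toZMod (k.1 2 2) ≠ 0 := by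
    intro k hk
    obtain ⟨h1, h2, h3⟩ := (hmem k).1 hk
    have := red_det p k
    rw [Matrix.det_fin_three] at this
    simp only [map_add, map_sub, map_mul, h1, h2, h3] at this
    constructor <;> intro h <;> simp [h] at this
  rw [Subgroup.relIndex, index_of_fun _ (fun k : H =>
    PadicInt.toZMod (d (k.1.1 0 2)) / PadicInt.toZMod (k.1.1 0 0))]
  · simp
  · intro x
    obtain ⟨y, rfl⟩ := red_surj p x
    obtain ⟨k, hk⟩ := exists_GL p !![1, 0, p * y; 0, 1, 0; 0, 0, 1]
      (by rw [Matrix.det_fin_three]; simp)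
    have h0 : k.1 0 2 = p * y := by rw [hk]; simp
    have hkH : k ∈ H := by rw [hmem, hk]; simp
    refine ⟨⟨k, hkH⟩, ?_⟩
    have h2 := hd _ ((hmem k).1 hkH).2.1
    have h3 : d (k.1 0 2) = y := mul_left_cancel₀ hp (by rw [← h2, h0])
    have h4 : k.1 0 0 = 1 := by rw [hk]; simp
    simp [h3, h4]
  · intro a b
    rw [Subgroup.mem_subgroupOf, mem_stab10]
    obtain ⟨a1, a2, a3⟩ := (hmem a.1).1 a.2
    obtain ⟨b1, b2, b3⟩ := (hmem b.1).1 b.2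
    obtain ⟨c1, c2, c3⟩ := (hmem (a.1 * b.1⁻¹)).1 (a * b⁻¹).2
    have c0 := (hdiag (a.1 * b.1⁻¹) (a * b⁻¹).2).1
    obtain ⟨b0, b4⟩ := hdiag b.1 b.2
    have a0 := (hdiag a.1 a.2).1
    have e0 := congrArg PadicInt.toZMod (mul_entry p a b 0 0)
    have e2 := mul_entry p a b 0 2
    change _ ↔ PadicInt.toZMod ((a.1 * b.1⁻¹).1 0 1) = 0 ∧ (p : ℤ_[p]) ^ 2 ∣ (a.1 * b.1⁻¹).1 0 2 ∧
      PadicInt.toZMod ((a.1 * b.1⁻¹).1 1 2) = 0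
    generalize (a.1 * b.1⁻¹).1 = c at *
    have da := hd _ a2
    have db := hd _ b2
    have dc := hd _ c2
    have dc1 := hd _ c1
    have db3 := hd _ b3
    generalize d (a.1.1 0 2) = x at *
    generalize d (b.1.1 0 2) = y at *
    generalize d (c 0 2) = z at *
    simp only [map_add, map_mul, c1, c2, zero_mul, add_zero] at e0
    have e3 : x = c 0 0 * y + p * (d (c 0 1) * d (b.1.1 1 2)) + z * b.1.1 2 2 := by
      apply mul_left_cancel₀ hp
      rw [← da, e2]
      linear_combination c 0 0 * db + b.1.1 1 2 * dc1 + p * d (c 0 1) * db3 + b.1.1 2 2 * dc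
    have e4 := congrArg PadicInt.toZMod e3
    simp only [map_add, map_mul, map_natCast, CharP.cast_eq_zero, zero_mul, add_zero] at e4
    have hz : (p : ℤ_[p]) ^ 2 ∣ c 0 2 ↔ PadicInt.toZMod z = 0 := by
      rw [dc, pow_two, mul_dvd_mul_iff_left hp, dvd_iff]
    simp only [c1, c3, hz, true_and, and_true]
    rw [div_eq_div_iff a0 b0, e4, e0]
    constructor
    · intro h
      have : PadicInt.toZMod z * (PadicInt.toZMod (b.1.1 2 2) * PadicInt.toZMod (b.1.1 0 0)) = 0 := by
        linear_combination h
      exact (mul_eq_zero.1 this).resolve_right (mul_ne_zero b4 b0)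
    · intro h
      rw [h]; ring

lemma index_total : (stab p 1 0 (-1)).index = (p ^ 2 + p) * (p ^ 2 + p + 1) := by
  have h1 : stab p 1 0 (-1) ≤ stab p 1 1 0 ⊓ stab p 1 0 0 := by
    intro k hk
    rw [mem_stab10] at hk
    rw [Subgroup.mem_inf, mem_stab100, mem_stab110]
    have : PadicInt.toZMod (k.1 0 2) = 0 :=
      (dvd_iff p _).1 ((dvd_pow_self _ two_ne_zero).trans hk.2.1)
    tauto
  rw [← Subgroup.relIndex_mul_index h1, ← Subgroup.relIndex_mul_index
    (inf_le_right : stab p 1 1 0 ⊓ stab p 1 0 0 ≤ stab p 1 0 0), Subgroup.inf_relIndex_right,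
    index10, index110, index100]
  ring

/-- `μ_p(K_p(1,0,0)) = p² + p + 1` and
`μ_p(K_p(1,0,−1)) = (p² + p)(p² + p + 1)`. -/
theorem statement1 (μ : Measure (GL (Fin 3) ℚ_[p])) [μ.IsHaarMeasure]
    (hμ : μ (padicK p) = 1) :
    μ (padicDoubleCoset p 1 0 0) = ((p : ENNReal) ^ 2 + p + 1) ∧
    μ (padicDoubleCoset p 1 0 (-1)) = ((p : ENNReal) ^ 2 + p) * ((p : ENNReal) ^ 2 + p + 1) := by
  have hp := (Fact.out : p.Prime).pos
  constructor
  · rw [measure_dc p μ hμ _ _ _ (by rw [index100]; positivity), index100]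
    push_cast; rfl
  · rw [measure_dc p μ hμ _ _ _ (by rw [index_total]; positivity), index_total]
    push_cast; rfl

end
end

section
/- Let Φ = p^{−1}·Φ_p(1,0,0) + p^{−2}·Φ_p(2,1,0) and Φ^* = p^{−1}·Φ_p(0,0,−1) + p^{−2}·Φ_p(0,−1,−2) (so Φ^*(g) = Φ(g⁻¹)). Then Φ * Φ^* can be written uniquely as a finite sum Σ_{a ≥ b ≥ c} β(a,b,c)·Φ_p(a,b,c) over triples of integers a ≥ b ≥ c, and the coefficients satisfy: β(a,b,c) ≥ 0 for all (a,b,c); if β(a,b,c) ≠ 0 then one of the following holds: (a + b + c = 2 and −1 ≤ c ≤ b ≤ a ≤ 2), or (a + b + c = 0 and −2 ≤ c ≤ b ≤ a ≤ 2), or (a + b + c = −2 and −2 ≤ c ≤ b ≤ a ≤ 1); and β(a,b,c) ≤ 121·p^{c−a} for all (a,b,c). -/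
open MeasureTheory

noncomputable section

variable (p : ℕ) [Fact p.Prime]

/-- `Φ = p⁻¹·Φ_p(1,0,0) + p⁻²·Φ_p(2,1,0)`. -/
def padicBigPhi : GL (Fin 3) ℚ_[p] → ℝ :=
  fun x => (p : ℝ)⁻¹ * padicPhi p 1 0 0 x + ((p : ℝ) ^ 2)⁻¹ * padicPhi p 2 1 0 x

/-- `Φ^* = p⁻¹·Φ_p(0,0,−1) + p⁻²·Φ_p(0,−1,−2)`, the adjoint of `Φ`. -/
def padicBigPhiStar : GL (Fin 3) ℚ_[p] → ℝ :=
  fun x => (p : ℝ)⁻¹ * padicPhi p 0 0 (-1) x + ((p : ℝ) ^ 2)⁻¹ * padicPhi p 0 (-1) (-2) x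

/-- The property of being an expansion `Φ * Φ^* = Σ_{a ≥ b ≥ c} β(a,b,c) Φ_p(a,b,c)`
with finitely supported coefficients supported on triples `a ≥ b ≥ c`. -/
def IsHeckeExpansion (μ : Measure (GL (Fin 3) ℚ_[p])) (β : ℤ × ℤ × ℤ →₀ ℝ) : Prop :=
  (∀ t ∈ β.support, t.2.2 ≤ t.2.1 ∧ t.2.1 ≤ t.1) ∧
  ∀ x, padicConv p μ (padicBigPhi p) (padicBigPhiStar p) x =
    β.sum fun t c => c * padicPhi p t.1 t.2.1 t.2.2 x

/-! ### Auxiliary facts -/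

instance hkBorel : BorelSpace (GL (Fin 3) ℚ_[p]) := ⟨rfl⟩

/-- All entries have norm at most `r`. -/
def hkBd (r : ℝ) (M : Matrix (Fin 3) (Fin 3) ℚ_[p]) : Prop := ∀ i j, ‖M i j‖ ≤ r

lemma hk_pos : (0 : ℝ) < p := by exact_mod_cast (Fact.out : p.Prime).pos

lemma hk_one_lt : (1 : ℝ) < p := by exact_mod_cast (Fact.out : p.Prime).one_lt

lemma hk_pne : (p : ℚ_[p]) ≠ 0 := by
  exact_mod_cast (Fact.out : p.Prime).ne_zero

variable {p}

lemma hkBd_mul {r s : ℝ} {M N : Matrix (Fin 3) (Fin 3) ℚ_[p]} (hr : 0 ≤ r)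
    (hM : hkBd p r M) (hN : hkBd p s N) : hkBd p (r * s) (M * N) := by
  intro i j
  rw [Matrix.mul_apply, Fin.sum_univ_three]
  have h : ∀ l, ‖M i l * N l j‖ ≤ r * s := fun l => by
    rw [norm_mul]
    exact mul_le_mul (hM i l) (hN l j) (norm_nonneg _) hr
  refine (IsUltrametricDist.norm_add_le_max _ _).trans (max_le ?_ (h 2))
  exact (IsUltrametricDist.norm_add_le_max _ _).trans (max_le (h 0) (h 1))

/-- Bounds on the invariants of a matrix. -/
def hkT (lo hi d : ℤ) : Set (GL (Fin 3) ℚ_[p]) :=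
  {g | hkBd p ((p : ℝ) ^ (-lo)) g.1 ∧ hkBd p ((p : ℝ) ^ hi) g⁻¹.1 ∧ ‖g.1.det‖ = (p : ℝ) ^ (-d)}

lemma hkT_mul {lo hi d lo' hi' d' : ℤ} {g h : GL (Fin 3) ℚ_[p]} (hg : g ∈ hkT lo hi d)
    (hh : h ∈ hkT lo' hi' d') : g * h ∈ hkT (lo + lo') (hi + hi') (d + d') := by
  have hp := (hk_pos p).ne'
  refine ⟨?_, ?_, ?_⟩
  · rw [neg_add, zpow_add₀ hp]
    exact hkBd_mul (by positivity) hg.1 hh.1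
  · rw [add_comm, zpow_add₀ hp, mul_inv_rev]
    exact hkBd_mul (by positivity) hh.2.1 hg.2.1
  · rw [Units.val_mul, Matrix.det_mul, norm_mul, hg.2.2, hh.2.2, neg_add, zpow_add₀ hp]

lemma hkT_inv {lo hi d : ℤ} {g : GL (Fin 3) ℚ_[p]} (hg : g ∈ hkT lo hi d) :
    g⁻¹ ∈ hkT (-hi) (-lo) (-d) := by
  refine ⟨by simpa using hg.2.1, by simpa using hg.1, ?_⟩
  have h : g.1.det * (g⁻¹).1.det = 1 := by
    rw [← Matrix.det_mul, ← Units.val_mul]; simp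
  have h2 := congrArg norm h
  rw [norm_mul, norm_one, hg.2.2] at h2
  rw [neg_neg]
  have h3 : (p : ℝ) ^ (-d) * (p : ℝ) ^ d = 1 := by
    rw [← zpow_add₀ (hk_pos p).ne']; simp
  have h4 : (p : ℝ) ^ (-d) ≠ 0 := zpow_ne_zero _ (hk_pos p).ne'
  exact mul_left_cancel₀ h4 (h2.trans h3.symm)

lemma hkT_mem_K {k : GL (Fin 3) ℚ_[p]} (hk : k ∈ padicK p) : k ∈ hkT 0 0 0 := by
  obtain ⟨u, rfl⟩ := hk
  refine ⟨?_, ?_, ?_⟩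
  · intro i j
    have h := PadicInt.norm_le_one (u.1 i j)
    rw [neg_zero, zpow_zero]
    exact h
  · intro i j
    rw [← map_inv]
    have h := PadicInt.norm_le_one ((u⁻¹).1 i j)
    rw [zpow_zero]
    exact h
  · have h : IsUnit (u.1.det) := (Matrix.isUnit_iff_isUnit_det _).1 u.isUnit
    have h2 := PadicInt.isUnit_iff.1 h
    have h3 : (PadicInt.Coe.ringHom (p := p)) u.1.det
        = (RingHom.mapMatrix (PadicInt.Coe.ringHom (p := p)) u.1).det := RingHom.map_det _ _
    change ‖(RingHom.mapMatrix (PadicInt.Coe.ringHom (p := p)) u.1).det‖ = _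
    rw [← h3, neg_zero, zpow_zero]
    exact h2

lemma hkK_mul {k l : GL (Fin 3) ℚ_[p]} (hk : k ∈ padicK p) (hl : l ∈ padicK p) :
    k * l ∈ padicK p := by
  obtain ⟨u, rfl⟩ := hk
  obtain ⟨v, rfl⟩ := hl
  exact ⟨u * v, by simp⟩

lemma hkK_inv {k : GL (Fin 3) ℚ_[p]} (hk : k ∈ padicK p) : k⁻¹ ∈ padicK p := by
  obtain ⟨u, rfl⟩ := hk
  exact ⟨u⁻¹, by simp⟩

lemma hkK_one : (1 : GL (Fin 3) ℚ_[p]) ∈ padicK p := ⟨1, by simp⟩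

lemma hkK_of {M : Matrix (Fin 3) (Fin 3) ℚ_[p]} (hM : ∀ i j, ‖M i j‖ ≤ 1) (hd : ‖M.det‖ = 1) :
    ∃ k ∈ padicK p, k.1 = M := by
  let N : Matrix (Fin 3) (Fin 3) ℤ_[p] := fun i j => ⟨M i j, hM i j⟩
  have hN : RingHom.mapMatrix (PadicInt.Coe.ringHom (p := p)) N = M := by
    ext i j; rfl
  have h3 : (PadicInt.Coe.ringHom (p := p)) N.det = M.det := by
    rw [← hN]; exact RingHom.map_det _ _
  have hu : IsUnit N := by
    rw [Matrix.isUnit_iff_isUnit_det, PadicInt.isUnit_iff, PadicInt.norm_def]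
    have : ((N.det : ℤ_[p]) : ℚ_[p]) = M.det := h3
    rw [this, hd]
  refine ⟨_, ⟨hu.unit, rfl⟩, ?_⟩
  exact hN

lemma hkT_right {lo hi d : ℤ} {g k : GL (Fin 3) ℚ_[p]} (hg : g ∈ hkT lo hi d)
    (hk : k ∈ padicK p) : g * k ∈ hkT lo hi d := by
  simpa using hkT_mul hg (hkT_mem_K hk)

lemma hk_norm_zpow (a : ℤ) : ‖(p : ℚ_[p]) ^ a‖ = (p : ℝ) ^ (-a) := by
  simp

lemma hkdiag_val (a b c : ℤ) : (padicDiag p a b c).1 =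
    !![(p : ℚ_[p]) ^ a, 0, 0; 0, (p : ℚ_[p]) ^ b, 0; 0, 0, (p : ℚ_[p]) ^ c] := by
  ext i j
  fin_cases i <;> fin_cases j <;> simp [padicDiag]

lemma hkdiag_inv (a b c : ℤ) : (padicDiag p a b c)⁻¹ = padicDiag p (-a) (-b) (-c) := by
  rw [inv_eq_iff_mul_eq_one]
  have hp := hk_pne p
  ext i j
  rw [Units.val_mul, hkdiag_val, hkdiag_val]
  fin_cases i <;> fin_cases j <;> simp [Matrix.mul_apply, Fin.sum_univ_three] <;>
    exact mul_inv_cancel₀ (zpow_ne_zero _ hp)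

lemma hk_det_diag (a b c : ℤ) : ‖(padicDiag p a b c).1.det‖ = (p : ℝ) ^ (-(a + b + c)) := by
  rw [hkdiag_val, Matrix.det_fin_three]
  have hp := (hk_pos p).ne'
  simp only [neg_add, zpow_add₀ hp]
  simp

lemma hkdiag_mem {a b c : ℤ} (h1 : c ≤ b) (h2 : b ≤ a) :
    padicDiag p a b c ∈ hkT c a (a + b + c) := by
  have hp := hk_one_lt p
  refine ⟨?_, ?_, hk_det_diag a b c⟩
  · rw [hkdiag_val]
    have h3 := zpow_le_zpow_right₀ hp.le (show -b ≤ -c by omega)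
    have h4 := zpow_le_zpow_right₀ hp.le (show -a ≤ -c by omega)
    have h0 : (0 : ℝ) < (p : ℝ) ^ (-c) := zpow_pos (hk_pos p) _
    intro i j
    fin_cases i <;> fin_cases j <;> simp at * <;> first | assumption | positivity
  · rw [hkdiag_inv, hkdiag_val]
    have h3 := zpow_le_zpow_right₀ hp.le (show b ≤ a by omega)
    have h4 := zpow_le_zpow_right₀ hp.le (show c ≤ a by omega)
    have h0 : (0 : ℝ) < (p : ℝ) ^ (a) := zpow_pos (hk_pos p) _
    intro i j
    fin_cases i <;> fin_cases j <;> simp at * <;> first | assumption | positivity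

lemma hkdc_sub {a b c : ℤ} (h1 : c ≤ b) (h2 : b ≤ a) :
    padicDoubleCoset p a b c ⊆ hkT c a (a + b + c) := by
  rintro x ⟨k₁, hk₁, k₂, hk₂, rfl⟩
  simpa using hkT_mul (hkT_mul (hkT_mem_K hk₁) (hkdiag_mem h1 h2)) (hkT_mem_K hk₂)

lemma hkdiag_bounds {a b c lo hi d : ℤ} (h : padicDiag p a b c ∈ hkT lo hi d) :
    (lo ≤ a ∧ lo ≤ b ∧ lo ≤ c) ∧ (a ≤ hi ∧ b ≤ hi ∧ c ≤ hi) ∧ a + b + c = d := by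
  have hp := hk_one_lt p
  obtain ⟨h1, h2, h3⟩ := h
  rw [hkdiag_inv, hkdiag_val] at h2
  rw [hkdiag_val] at h1
  rw [hk_det_diag] at h3
  have e : ∀ x y : ℤ, (p : ℝ) ^ x ≤ (p : ℝ) ^ y ↔ x ≤ y := fun x y => zpow_le_zpow_iff_right₀ hp
  have a0 := h1 0 0
  have a1 := h1 1 1
  have a2 := h1 2 2
  have b0 := h2 0 0
  have b1 := h2 1 1
  have b2 := h2 2 2
  have h3 := zpow_right_injective₀ (hk_pos p) hp.ne' h3
  simp only [Matrix.of_apply, Matrix.cons_val', Matrix.cons_val, hk_norm_zpow, e, Matrix.cons_val_zero, Matrix.cons_val_one] at a0 a1 a2 b0 b1 b2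
  omega

lemma hk_two (r s : ℚ_[p]) : ∃ α β γ δ : ℚ_[p], ‖α‖ ≤ 1 ∧ ‖β‖ ≤ 1 ∧ ‖γ‖ ≤ 1 ∧ ‖δ‖ ≤ 1 ∧
    ‖α * δ - β * γ‖ = 1 ∧ r * α + s * γ = 0 := by
  rcases le_or_gt ‖r‖ ‖s‖ with h | h
  · refine ⟨1, 0, -(r / s), 1, by simp, by simp, ?_, by simp, by simp, ?_⟩
    · rw [norm_neg, norm_div]
      exact div_le_one_of_le₀ h (norm_nonneg _)
    · by_cases hs : s = 0
      · subst hs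
        simp at h
        simp [h]
      · field_simp
        ring
  · have hr : r ≠ 0 := by
      rintro rfl
      simp at h
      exact absurd h (not_lt.2 (norm_nonneg _))
    refine ⟨-(s / r), 1, 1, 0, ?_, by simp, by simp, by simp, by simp, ?_⟩
    · rw [norm_neg, norm_div]
      exact div_le_one_of_le₀ h.le (norm_nonneg _)
    · field_simp
      ring

/-- Upper triangular matrices. -/
def hkTri (d₁ d₂ d₃ u v w : ℚ_[p]) : Matrix (Fin 3) (Fin 3) ℚ_[p] :=
  !![d₁, u, v; 0, d₂, w; 0, 0, d₃]

lemma hk_unit_part {x : ℚ_[p]} (hx : x ≠ 0) : ∃ (e : ℤ) (u : ℚ_[p]), ‖u‖ = 1 ∧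
    x * u = (p : ℚ_[p]) ^ e := by
  refine ⟨x.valuation, x⁻¹ * (p : ℚ_[p]) ^ x.valuation, ?_, ?_⟩
  · rw [norm_mul, norm_inv, hk_norm_zpow, Padic.norm_eq_zpow_neg_valuation hx]
    exact inv_mul_cancel₀ (zpow_ne_zero _ (hk_pos p).ne')
  · field_simp

lemma hk_det_ne (g : GL (Fin 3) ℚ_[p]) : g.1.det ≠ 0 :=
  ((Matrix.isUnit_iff_isUnit_det _).1 g.isUnit).ne_zero

lemma hk_diag_unit {u₁ u₂ u₃ : ℚ_[p]} (h1 : ‖u₁‖ = 1) (h2 : ‖u₂‖ = 1) (h3 : ‖u₃‖ = 1) :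
    ∃ k ∈ padicK p, k.1 = !![u₁, 0, 0; 0, u₂, 0; 0, 0, u₃] := by
  apply hkK_of
  · intro i j
    fin_cases i <;> fin_cases j <;> simp [h1, h2, h3]
  · rw [Matrix.det_fin_three]
    simp [h1, h2, h3]

lemma hk_iwasawa (g : GL (Fin 3) ℚ_[p]) : ∃ k ∈ padicK p, ∃ (f₁ f₂ f₃ : ℤ) (u v w : ℚ_[p]),
    (g * k).1 = hkTri ((p : ℚ_[p]) ^ f₁) ((p : ℚ_[p]) ^ f₂) ((p : ℚ_[p]) ^ f₃) u v w := by
  have s1 : ∃ k ∈ padicK p, (g * k).1 2 0 = 0 := by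
    obtain ⟨α, β, γ, δ, h1, h2, h3, h4, h5, h6⟩ := hk_two (g.1 2 0) (g.1 2 2)
    obtain ⟨k, hk, hkv⟩ := hkK_of (M := !![α, 0, β; 0, 1, 0; γ, 0, δ])
      (by intro i j; fin_cases i <;> fin_cases j <;> simp [h1, h2, h3, h4])
      (by rw [Matrix.det_fin_three]; simpa using h5)
    refine ⟨k, hk, ?_⟩
    rw [Units.val_mul, hkv]
    simpa [Matrix.mul_apply, Fin.sum_univ_three] using h6
  obtain ⟨k1, hk1, e1⟩ := s1
  have s2 : ∃ k ∈ padicK p, (g * k).1 2 0 = 0 ∧ (g * k).1 2 1 = 0 := by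
    obtain ⟨α, β, γ, δ, h1, h2, h3, h4, h5, h6⟩ := hk_two ((g * k1).1 2 1) ((g * k1).1 2 2)
    obtain ⟨k, hk, hkv⟩ := hkK_of (M := !![1, 0, 0; 0, α, β; 0, γ, δ])
      (by intro i j; fin_cases i <;> fin_cases j <;> simp [h1, h2, h3, h4])
      (by rw [Matrix.det_fin_three]; simpa using h5)
    refine ⟨k1 * k, hkK_mul hk1 hk, ?_⟩
    rw [← mul_assoc]
    generalize g * k1 = g' at *
    rw [Units.val_mul, hkv]
    constructor
    · simpa [Matrix.mul_apply, Fin.sum_univ_three] using e1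
    · simpa [Matrix.mul_apply, Fin.sum_univ_three] using h6
  obtain ⟨k2, hk2, e2, e2'⟩ := s2
  have s3 : ∃ k ∈ padicK p, (g * k).1 2 0 = 0 ∧ (g * k).1 2 1 = 0 ∧ (g * k).1 1 0 = 0 := by
    obtain ⟨α, β, γ, δ, h1, h2, h3, h4, h5, h6⟩ := hk_two ((g * k2).1 1 0) ((g * k2).1 1 1)
    obtain ⟨k, hk, hkv⟩ := hkK_of (M := !![α, β, 0; γ, δ, 0; 0, 0, 1])
      (by intro i j; fin_cases i <;> fin_cases j <;> simp [h1, h2, h3, h4])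
      (by rw [Matrix.det_fin_three]; simpa using h5)
    refine ⟨k2 * k, hkK_mul hk2 hk, ?_⟩
    rw [← mul_assoc]
    generalize g * k2 = g' at *
    rw [Units.val_mul, hkv]
    refine ⟨?_, ?_, ?_⟩
    · simp [Matrix.mul_apply, Fin.sum_univ_three, e2, e2']
    · simp [Matrix.mul_apply, Fin.sum_univ_three, e2, e2']
    · simpa [Matrix.mul_apply, Fin.sum_univ_three] using h6
  obtain ⟨k3, hk3, e3, e3', e3''⟩ := s3
  have hd := hk_det_ne (g * k3)
  rw [Matrix.det_fin_three, e3, e3', e3''] at hd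
  have hd0 : (g * k3).1 0 0 ≠ 0 := by
    intro h; rw [h] at hd; simp at hd
  have hd1 : (g * k3).1 1 1 ≠ 0 := by
    intro h; rw [h] at hd; simp at hd
  have hd2 : (g * k3).1 2 2 ≠ 0 := by
    intro h; rw [h] at hd; simp at hd
  obtain ⟨f0, u0, hu0, h0⟩ := hk_unit_part hd0
  obtain ⟨f1, u1, hu1, h1⟩ := hk_unit_part hd1
  obtain ⟨f2, u2, hu2, h2⟩ := hk_unit_part hd2
  obtain ⟨k, hk, hkv⟩ := hk_diag_unit hu0 hu1 hu2
  refine ⟨k3 * k, hkK_mul hk3 hk, f0, f1, f2, (g * k3).1 0 1 * u1, (g * k3).1 0 2 * u2,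
    (g * k3).1 1 2 * u2, ?_⟩
  rw [← mul_assoc]
  generalize g * k3 = g' at *
  rw [Units.val_mul, hkv]
  ext i j
  fin_cases i <;> fin_cases j <;>
    simp [hkTri, Matrix.mul_apply, Fin.sum_univ_three, e3, e3', e3'', h0, h1, h2]

/-- The Cartan equivalence relation. -/
def hkEq (g h : GL (Fin 3) ℚ_[p]) : Prop := ∃ k ∈ padicK p, ∃ l ∈ padicK p, h = k * g * l

lemma hkEq_trans {g h j : GL (Fin 3) ℚ_[p]} (h1 : hkEq g h) (h2 : hkEq h j) : hkEq g j := by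
  obtain ⟨k, hk, l, hl, rfl⟩ := h1
  obtain ⟨k', hk', l', hl', rfl⟩ := h2
  exact ⟨k' * k, hkK_mul hk' hk, l * l', hkK_mul hl hl', by group⟩

lemma hkEq_symm {g h : GL (Fin 3) ℚ_[p]} (h1 : hkEq g h) : hkEq h g := by
  obtain ⟨k, hk, l, hl, rfl⟩ := h1
  exact ⟨k⁻¹, hkK_inv hk, l⁻¹, hkK_inv hl, by group⟩

lemma hk_perm (σ : Equiv.Perm (Fin 3)) : ∃ k ∈ padicK p, k.1 = σ.permMatrix ℚ_[p] := by
  apply hkK_of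
  · intro i j
    rw [Equiv.Perm.permMatrix, PEquiv.toMatrix_apply]
    split_ifs <;> simp
  · rw [Matrix.det_permutation]
    rcases Int.units_eq_one_or (Equiv.Perm.sign σ) with h | h <;> simp [h]

lemma hkEq_perm (g : GL (Fin 3) ℚ_[p]) (σ τ : Equiv.Perm (Fin 3)) :
    ∃ h, hkEq g h ∧ ∀ i j, h.1 i j = g.1 (σ i) (τ j) := by
  obtain ⟨k, hk, hkv⟩ := hk_perm (p := p) σ
  obtain ⟨l, hl, hlv⟩ := hk_perm (p := p) τ.symm
  refine ⟨k * g * l, ⟨k, hk, l, hl, rfl⟩, fun i j => ?_⟩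
  rw [Units.val_mul, Units.val_mul, hkv, hlv, Equiv.Perm.permMatrix, Equiv.Perm.permMatrix,
    PEquiv.toMatrix_toPEquiv_mul, PEquiv.mul_toMatrix_toPEquiv]
  simp

lemma hk_div_le {x y : ℚ_[p]} (h : ‖x‖ ≤ ‖y‖) : ‖-(x / y)‖ ≤ 1 := by
  rw [norm_neg, norm_div]
  exact div_le_one_of_le₀ h (norm_nonneg _)

lemma hk_cartan (g : GL (Fin 3) ℚ_[p]) :
    ∃ a b c : ℤ, c ≤ b ∧ b ≤ a ∧ g ∈ padicDoubleCoset p a b c := by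
  -- move an entry of maximal norm to the last position
  have s1 : ∃ h, hkEq g h ∧ ∀ i j, ‖h.1 i j‖ ≤ ‖h.1 2 2‖ := by
    obtain ⟨⟨i0, j0⟩, hm⟩ := Finite.exists_max (fun q : Fin 3 × Fin 3 => ‖g.1 q.1 q.2‖)
    obtain ⟨h, he, hh⟩ := hkEq_perm g (Equiv.swap i0 2) (Equiv.swap j0 2)
    refine ⟨h, he, fun i j => ?_⟩
    rw [hh, hh]
    simpa using hm (Equiv.swap i0 2 i, Equiv.swap j0 2 j)
  obtain ⟨g1, hg1, m1⟩ := s1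
  have n1 : g1.1 2 2 ≠ 0 := by
    intro h0
    have : g1.1 = 0 := by
      ext i j
      have := m1 i j
      rw [h0] at this
      simpa using this
    have hd := hk_det_ne g1
    rw [this] at hd
    simp at hd
  have s2 : ∃ h, hkEq g h ∧ (∀ i j, ‖h.1 i j‖ ≤ ‖h.1 2 2‖) ∧ h.1 0 2 = 0 ∧ h.1 1 2 = 0 ∧
      h.1 2 0 = 0 ∧ h.1 2 1 = 0 := by
    obtain ⟨k, hk, hkv⟩ := hkK_of
      (M := !![1, 0, -(g1.1 0 2 / g1.1 2 2); 0, 1, -(g1.1 1 2 / g1.1 2 2); 0, 0, 1])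
      (by
        have := hk_div_le (m1 0 2)
        have := hk_div_le (m1 1 2)
        intro i j; fin_cases i <;> fin_cases j <;> simp at * <;> assumption)
      (by rw [Matrix.det_fin_three]; simp)
    obtain ⟨l, hl, hlv⟩ := hkK_of
      (M := !![1, 0, 0; 0, 1, 0; -(g1.1 2 0 / g1.1 2 2), -(g1.1 2 1 / g1.1 2 2), 1])
      (by
        have := hk_div_le (m1 2 0)
        have := hk_div_le (m1 2 1)
        intro i j; fin_cases i <;> fin_cases j <;> simp at * <;> assumption)
      (by rw [Matrix.det_fin_three]; simp)
    have hb : hkBd p ‖g1.1 2 2‖ (k * g1 * l).1 := by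
      have h1 := hkBd_mul (p := p) (by simp) (hkBd_mul (by simp) (hkT_mem_K hk).1 m1)
        (hkT_mem_K hl).1
      simpa using h1
    have e22 : (k * g1 * l).1 2 2 = g1.1 2 2 := by
      rw [Units.val_mul, Units.val_mul, hkv, hlv]
      simp [Matrix.mul_apply, Fin.sum_univ_three, Matrix.vecMul, dotProduct]
    refine ⟨k * g1 * l, hkEq_trans hg1 ⟨k, hk, l, hl, rfl⟩, ?_, ?_, ?_, ?_, ?_⟩
    · rw [e22]; exact hb
    all_goals
      rw [Units.val_mul, Units.val_mul, hkv, hlv]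
      simp [Matrix.mul_apply, Fin.sum_univ_three, Matrix.vecMul, dotProduct]
      try field_simp
      try ring
  obtain ⟨g2, hg2, m2, z1, z2, z3, z4⟩ := s2
  have s3 : ∃ h, hkEq g h ∧ (∀ i j, ‖h.1 i j‖ ≤ ‖h.1 2 2‖) ∧ h.1 0 2 = 0 ∧ h.1 1 2 = 0 ∧
      h.1 2 0 = 0 ∧ h.1 2 1 = 0 ∧ ‖h.1 0 0‖ ≤ ‖h.1 1 1‖ ∧ ‖h.1 0 1‖ ≤ ‖h.1 1 1‖ ∧
      ‖h.1 1 0‖ ≤ ‖h.1 1 1‖ := by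
    obtain ⟨⟨i0, j0⟩, hm⟩ := Finite.exists_max
      (fun q : Fin 2 × Fin 2 => ‖g2.1 q.1.castSucc q.2.castSucc‖)
    have hm' : ∀ i j : Fin 2, ‖g2.1 i.castSucc j.castSucc‖ ≤ ‖g2.1 i0.castSucc j0.castSucc‖ :=
      fun i j => hm (i, j)
    obtain ⟨h, he, hh⟩ := hkEq_perm g2 (Equiv.swap i0.castSucc 1) (Equiv.swap j0.castSucc 1)
    have a00 := hm' 0 0
    have a01 := hm' 0 1
    have a10 := hm' 1 0
    have a11 := hm' 1 1
    have e2 : (Equiv.swap (0 : Fin 3) 1) 2 = 2 := by decide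
    refine ⟨h, hkEq_trans hg2 he, ?_⟩
    simp only [hh]
    clear hm hm' hh he
    fin_cases i0 <;> fin_cases j0 <;> simp [e2] at * <;>
      simp [m2, z1, z2, z3, z4, a00, a01, a10, a11]
  obtain ⟨g3, hg3, m3, z1, z2, z3, z4, m4, m5, m6⟩ := s3
  have n2 : g3.1 1 1 ≠ 0 := by
    intro h0
    rw [h0] at m4 m5 m6
    simp at m4 m5 m6
    have hd := hk_det_ne g3
    rw [Matrix.det_fin_three] at hd
    simp [h0, m4, m5, m6, z1, z2] at hd
  have s4 : ∃ h, hkEq g h ∧ ‖h.1 0 0‖ ≤ ‖h.1 1 1‖ ∧ ‖h.1 1 1‖ ≤ ‖h.1 2 2‖ ∧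
      h.1 0 2 = 0 ∧ h.1 1 2 = 0 ∧ h.1 2 0 = 0 ∧ h.1 2 1 = 0 ∧ h.1 0 1 = 0 ∧ h.1 1 0 = 0 := by
    obtain ⟨k, hk, hkv⟩ := hkK_of
      (M := !![1, -(g3.1 0 1 / g3.1 1 1), 0; 0, 1, 0; 0, 0, 1])
      (by
        have := hk_div_le m5
        intro i j; fin_cases i <;> fin_cases j <;> simp at * <;> assumption)
      (by rw [Matrix.det_fin_three]; simp)
    obtain ⟨l, hl, hlv⟩ := hkK_of
      (M := !![1, 0, 0; -(g3.1 1 0 / g3.1 1 1), 1, 0; 0, 0, 1])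
      (by
        have := hk_div_le m6
        intro i j; fin_cases i <;> fin_cases j <;> simp at * <;> assumption)
      (by rw [Matrix.det_fin_three]; simp)
    refine ⟨k * g3 * l, hkEq_trans hg3 ⟨k, hk, l, hl, rfl⟩, ?_⟩
    have e11 : (k * g3 * l).1 1 1 = g3.1 1 1 := by
      rw [Units.val_mul, Units.val_mul, hkv, hlv]
      simp [Matrix.mul_apply, Fin.sum_univ_three, Matrix.vecMul, dotProduct]
    have e22 : (k * g3 * l).1 2 2 = g3.1 2 2 := by
      rw [Units.val_mul, Units.val_mul, hkv, hlv]
      simp [Matrix.mul_apply, Fin.sum_univ_three, Matrix.vecMul, dotProduct]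
    have e00 : (k * g3 * l).1 0 0 = g3.1 0 0 + g3.1 0 1 * -(g3.1 1 0 / g3.1 1 1) := by
      rw [Units.val_mul, Units.val_mul, hkv, hlv]
      simp [Matrix.mul_apply, Fin.sum_univ_three, Matrix.vecMul, dotProduct]
      try field_simp
      try ring
    refine ⟨?_, by rw [e11, e22]; exact m3 1 1, ?_⟩
    · rw [e00, e11]
      refine (IsUltrametricDist.norm_add_le_max _ _).trans (max_le m4 ?_)
      rw [norm_mul]
      calc _ ≤ ‖g3.1 1 1‖ * 1 := mul_le_mul m5 (hk_div_le m6) (norm_nonneg _) (norm_nonneg _)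
        _ = _ := mul_one _
    · clear e00 e11 e22 m3 m4 m5 m6
      rw [Units.val_mul, Units.val_mul, hkv, hlv]
      simp [Matrix.mul_apply, Fin.sum_univ_three, Matrix.vecMul, dotProduct, z1, z2, z3, z4, n2]
      rw [mul_comm (g3.1 1 1), div_mul_cancel₀ _ n2, add_neg_cancel]
  obtain ⟨g4, hg4, m7, m8, z1, z2, z3, z4, z5, z6⟩ := s4
  have hd := hk_det_ne g4
  rw [Matrix.det_fin_three, z1, z2, z3, z4, z5, z6] at hd
  have hd0 : g4.1 0 0 ≠ 0 := by
    intro h; rw [h] at hd; simp at hd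
  have hd1 : g4.1 1 1 ≠ 0 := by
    intro h; rw [h] at hd; simp at hd
  have hd2 : g4.1 2 2 ≠ 0 := by
    intro h; rw [h] at hd; simp at hd
  obtain ⟨f0, u0, hu0, h0⟩ := hk_unit_part hd0
  obtain ⟨f1, u1, hu1, h1⟩ := hk_unit_part hd1
  obtain ⟨f2, u2, hu2, h2⟩ := hk_unit_part hd2
  obtain ⟨k, hk, hkv⟩ := hk_diag_unit hu0 hu1 hu2
  have hn : ∀ {x u : ℚ_[p]} {f : ℤ}, ‖u‖ = 1 → x * u = (p : ℚ_[p]) ^ f →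
      ‖x‖ = (p : ℝ) ^ (-f) := by
    intro x u f hu hx
    rw [← hk_norm_zpow, ← hx, norm_mul, hu, mul_one]
  have e : ∀ x y : ℤ, (p : ℝ) ^ x ≤ (p : ℝ) ^ y ↔ x ≤ y :=
    fun x y => zpow_le_zpow_iff_right₀ (hk_one_lt p)
  rw [hn hu0 h0, hn hu1 h1, e] at m7
  rw [hn hu1 h1, hn hu2 h2, e] at m8
  refine ⟨f0, f1, f2, by omega, by omega, ?_⟩
  have hfin : g4 * k = padicDiag p f0 f1 f2 := by
    ext i j
    rw [Units.val_mul, hkv, hkdiag_val]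
    fin_cases i <;> fin_cases j <;>
      simp [Matrix.mul_apply, Fin.sum_univ_three, h0, h1, h2, z1, z2, z3, z4, z5, z6]
  have : hkEq g (padicDiag p f0 f1 f2) :=
    hkEq_trans hg4 ⟨1, hkK_one, k, hk, by rw [one_mul, hfin]⟩
  exact hkEq_symm this

/-- Upper triangular elements of `GL₃`. -/
def hkTriG (f₁ f₂ f₃ : ℤ) (u v w : ℚ_[p]) : GL (Fin 3) ℚ_[p] where
  val := hkTri ((p : ℚ_[p]) ^ f₁) ((p : ℚ_[p]) ^ f₂) ((p : ℚ_[p]) ^ f₃) u v w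
  inv := hkTri ((p : ℚ_[p]) ^ (-f₁)) ((p : ℚ_[p]) ^ (-f₂)) ((p : ℚ_[p]) ^ (-f₃))
    (-u * (p : ℚ_[p]) ^ (-f₁ - f₂)) ((u * w - v * (p : ℚ_[p]) ^ f₂) * (p : ℚ_[p]) ^ (-f₁ - f₂ - f₃))
    (-w * (p : ℚ_[p]) ^ (-f₂ - f₃))
  val_inv := by
    have h := hk_pne p
    have h1 := zpow_ne_zero f₁ h
    have h2 := zpow_ne_zero f₂ h
    have h3 := zpow_ne_zero f₃ h
    simp only [zpow_sub₀ h, zpow_neg]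
    ext i j
    fin_cases i <;> fin_cases j <;>
      simp [hkTri, Matrix.mul_apply, Fin.sum_univ_three] <;> field_simp <;> ring
  inv_val := by
    have h := hk_pne p
    have h1 := zpow_ne_zero f₁ h
    have h2 := zpow_ne_zero f₂ h
    have h3 := zpow_ne_zero f₃ h
    simp only [zpow_sub₀ h, zpow_neg]
    ext i j
    fin_cases i <;> fin_cases j <;>
      simp [hkTri, Matrix.mul_apply, Fin.sum_univ_three] <;> field_simp <;> ring

lemma hkTriG_val (f₁ f₂ f₃ : ℤ) (u v w : ℚ_[p]) : (hkTriG f₁ f₂ f₃ u v w).1 =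
    hkTri ((p : ℚ_[p]) ^ f₁) ((p : ℚ_[p]) ^ f₂) ((p : ℚ_[p]) ^ f₃) u v w := rfl

lemma hkTriG_inv (f₁ f₂ f₃ : ℤ) (u v w : ℚ_[p]) : ((hkTriG f₁ f₂ f₃ u v w)⁻¹).1 =
    hkTri ((p : ℚ_[p]) ^ (-f₁)) ((p : ℚ_[p]) ^ (-f₂)) ((p : ℚ_[p]) ^ (-f₃))
    (-u * (p : ℚ_[p]) ^ (-f₁ - f₂)) ((u * w - v * (p : ℚ_[p]) ^ f₂) * (p : ℚ_[p]) ^ (-f₁ - f₂ - f₃))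
    (-w * (p : ℚ_[p]) ^ (-f₂ - f₃)) := rfl

/-- The Iwasawa cells. -/
def hkA (f₁ f₂ f₃ : ℤ) : Set (GL (Fin 3) ℚ_[p]) :=
  {z | ∃ k ∈ padicK p, ∃ u v w : ℚ_[p], z * k = hkTriG f₁ f₂ f₃ u v w}

lemma hkA_exists (g : GL (Fin 3) ℚ_[p]) : ∃ f₁ f₂ f₃ : ℤ, g ∈ hkA f₁ f₂ f₃ := by
  obtain ⟨k, hk, f₁, f₂, f₃, u, v, w, h⟩ := hk_iwasawa g
  exact ⟨f₁, f₂, f₃, k, hk, u, v, w, Units.ext h⟩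

lemma hkA_diag {a b c e₁ e₂ e₃ : ℤ} {y : GL (Fin 3) ℚ_[p]} (hy : y ∈ hkA e₁ e₂ e₃) :
    (padicDiag p a b c)⁻¹ * y ∈ hkA (e₁ - a) (e₂ - b) (e₃ - c) := by
  obtain ⟨k, hk, u, v, w, h⟩ := hy
  refine ⟨k, hk, (p : ℚ_[p]) ^ (-a) * u, (p : ℚ_[p]) ^ (-a) * v, (p : ℚ_[p]) ^ (-b) * w, ?_⟩
  rw [mul_assoc, h, hkdiag_inv]
  ext i j
  have hp := hk_pne p
  rw [Units.val_mul, hkTriG_val, hkTriG_val, hkdiag_val]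
  simp only [sub_eq_neg_add, zpow_add₀ hp]
  fin_cases i <;> fin_cases j <;> simp [hkTri, Matrix.mul_apply, Fin.sum_univ_three]

lemma hkTriG_bounds {lo hi d f₁ f₂ f₃ : ℤ} {u v w : ℚ_[p]}
    (h : hkTriG f₁ f₂ f₃ u v w ∈ hkT lo hi d) :
    (lo ≤ f₁ ∧ lo ≤ f₂ ∧ lo ≤ f₃) ∧ (f₁ ≤ hi ∧ f₂ ≤ hi ∧ f₃ ≤ hi) ∧ f₁ + f₂ + f₃ = d := by
  have hp := hk_one_lt p
  obtain ⟨h1, h2, h3⟩ := h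
  rw [hkTriG_inv, hkTri] at h2
  rw [hkTriG_val, hkTri] at h1
  have hdet : (hkTriG f₁ f₂ f₃ u v w).1.det = (p : ℚ_[p]) ^ (f₁ + f₂ + f₃) := by
    rw [hkTriG_val, Matrix.det_fin_three, zpow_add₀ (hk_pne p), zpow_add₀ (hk_pne p)]
    simp [hkTri]
  rw [hdet, hk_norm_zpow] at h3
  have e : ∀ x y : ℤ, (p : ℝ) ^ x ≤ (p : ℝ) ^ y ↔ x ≤ y := fun x y => zpow_le_zpow_iff_right₀ hp
  have a0 := h1 0 0
  have a1 := h1 1 1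
  have a2 := h1 2 2
  have b0 := h2 0 0
  have b1 := h2 1 1
  have b2 := h2 2 2
  have h3 := zpow_right_injective₀ (hk_pos p) hp.ne' h3
  simp only [Matrix.of_apply, Matrix.cons_val', Matrix.cons_val, hk_norm_zpow, e, Matrix.cons_val_zero, Matrix.cons_val_one] at a0 a1 a2 b0 b1 b2
  omega

lemma hkA_bounds {lo hi d f₁ f₂ f₃ : ℤ} {z : GL (Fin 3) ℚ_[p]} (hz : z ∈ hkA f₁ f₂ f₃)
    (h : z ∈ hkT lo hi d) :
    (lo ≤ f₁ ∧ lo ≤ f₂ ∧ lo ≤ f₃) ∧ (f₁ ≤ hi ∧ f₂ ≤ hi ∧ f₃ ≤ hi) ∧ f₁ + f₂ + f₃ = d := by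
  obtain ⟨k, hk, u, v, w, e⟩ := hz
  exact hkTriG_bounds (e ▸ hkT_right h hk)

lemma hk_approx {u : ℚ_[p]} (hu : ‖u‖ ≤ 1) (n : ℕ) :
    ∃ a : ℕ, a < p ^ n ∧ ∃ s : ℚ_[p], ‖s‖ ≤ 1 ∧ u = a + (p : ℚ_[p]) ^ n * s := by
  let x : ℤ_[p] := ⟨u, hu⟩
  have h := PadicInt.appr_spec n x
  rw [Ideal.mem_span_singleton] at h
  obtain ⟨s, hs⟩ := h
  refine ⟨x.appr n, PadicInt.appr_lt x n, s, PadicInt.norm_le_one s, ?_⟩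
  have h2 := congrArg (fun t : ℤ_[p] => (t : ℚ_[p])) hs
  push_cast at h2
  rw [← h2]
  simp [x]

lemma hk_reduce {hi d : ℤ} {n₁ n₂ n₃ : ℕ} {z : GL (Fin 3) ℚ_[p]} (hz : z ∈ hkA n₁ n₂ n₃)
    (h : z ∈ hkT 0 hi d) : ∃ a c b : ℕ, a < p ^ n₁ ∧ c < p ^ n₁ ∧ b < p ^ n₂ ∧
      ∃ k ∈ padicK p, z = hkTriG n₁ n₂ n₃ a c b * k := by
  obtain ⟨k, hk, u, v, w, e⟩ := hz
  have ht : hkTriG n₁ n₂ n₃ u v w ∈ hkT 0 hi d := e ▸ hkT_right h hk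
  have hu : ‖u‖ ≤ 1 := by simpa [hkTriG_val, hkTri] using ht.1 0 1
  have hv : ‖v‖ ≤ 1 := by simpa [hkTriG_val, hkTri] using ht.1 0 2
  have hw : ‖w‖ ≤ 1 := by simpa [hkTriG_val, hkTri] using ht.1 1 2
  obtain ⟨a, ha, s, hs, rfl⟩ := hk_approx hu n₁
  obtain ⟨b, hb, t, ht', rfl⟩ := hk_approx hw n₂
  have hvt : ‖v - a * t‖ ≤ 1 := by
    rw [sub_eq_add_neg]
    refine (IsUltrametricDist.norm_add_le_max _ _).trans (max_le hv ?_)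
    rw [norm_neg, norm_mul]
    exact mul_le_one₀ (by simpa using Padic.norm_int_le_one (p := p) a) (norm_nonneg _) ht'
  obtain ⟨c, hc, r, hr, e2⟩ := hk_approx hvt n₁
  obtain ⟨l, hl, hlv⟩ := hkK_of (M := !![1, s, r; 0, 1, t; 0, 0, 1])
      (by intro i j; fin_cases i <;> fin_cases j <;> simp [hs, hr, ht'])
      (by rw [Matrix.det_fin_three]; simp)
  refine ⟨a, c, b, ha, hc, hb, l * k⁻¹, hkK_mul hl (hkK_inv hk), ?_⟩
  rw [← mul_assoc, eq_mul_inv_iff_mul_eq, e]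
  have hv' : v = c + (p : ℚ_[p]) ^ n₁ * r + a * t := by rw [← e2]; ring
  subst hv'
  ext i j
  rw [Units.val_mul, hkTriG_val, hkTriG_val, hlv]
  fin_cases i <;> fin_cases j <;> simp [hkTri, Matrix.mul_apply, Fin.sum_univ_three] <;> ring

lemma hk_cond {n₁ n₂ n₃ : ℕ} {a c b : ℕ} (h : hkTriG (p := p) n₁ n₂ n₃ a c b ∈ hkT 0 2 3) :
    (n₃ = 0 → p ∣ a) ∧ (n₁ = 0 → p ∣ b) ∧ (p : ℤ) ∣ a * b - c * p ^ n₂ := by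
  have hb := hkTriG_bounds h
  have h01 := h.2.1 0 1
  have h02 := h.2.1 0 2
  have h12 := h.2.1 1 2
  have hp := hk_pos p
  rw [hkTriG_inv, hkTri] at h01 h02 h12
  simp only [Matrix.of_apply, Matrix.cons_val', Matrix.cons_val, Matrix.cons_val_zero,
    Matrix.cons_val_one, norm_mul, norm_neg, hk_norm_zpow] at h01 h02 h12
  have key : ∀ (x : ℝ) (m : ℤ), x * (p : ℝ) ^ (-m) ≤ (p : ℝ) ^ (2 : ℤ) → m ≤ -3 →
      x ≤ (p : ℝ) ^ (-(1 : ℕ) : ℤ) := by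
    intro x m hx hm
    have h1 : x ≤ (p : ℝ) ^ (2 + m) := by
      rw [zpow_add₀ hp.ne']
      rw [zpow_neg] at hx
      have : (0 : ℝ) < (p : ℝ) ^ m := zpow_pos hp _
      rwa [← div_eq_mul_inv, div_le_iff₀ this] at hx
    exact h1.trans (zpow_le_zpow_right₀ (hk_one_lt p).le (by push_cast; omega))
  have dv : ∀ z : ℤ, ‖(z : ℚ_[p])‖ ≤ (p : ℝ) ^ (-(1 : ℕ) : ℤ) → (p : ℤ) ∣ z := by
    intro z hz
    have := (Padic.norm_int_le_pow_iff_dvd z 1).1 hz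
    simpa using this
  refine ⟨fun h3 => ?_, fun h1 => ?_, ?_⟩
  · have := dv a (by simpa using key _ _ h01 (by omega))
    exact_mod_cast this
  · have := dv b (by simpa using key _ _ h12 (by omega))
    exact_mod_cast this
  · refine dv _ ?_
    have := key _ _ h02 (by omega)
    push_cast
    simpa using this

lemma hk_cover (μ : Measure (GL (Fin 3) ℚ_[p])) [μ.IsHaarMeasure] (hμ : μ (padicK p) = 1)
    {hi d : ℤ} {n₁ n₂ n₃ : ℕ} (F : Finset (ℕ × ℕ × ℕ))
    (hF : ∀ a c b : ℕ, a < p ^ n₁ → c < p ^ n₁ → b < p ^ n₂ →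
      hkTriG (p := p) n₁ n₂ n₃ a c b ∈ hkT 0 hi d → (a, c, b) ∈ F) :
    μ (hkA n₁ n₂ n₃ ∩ hkT 0 hi d) ≤ F.card := by
  have hsub : hkA n₁ n₂ n₃ ∩ hkT 0 hi d ⊆ ⋃ t ∈ F,
      (fun z => (hkTriG (p := p) n₁ n₂ n₃ t.1 t.2.1 t.2.2)⁻¹ * z) ⁻¹' padicK p := by
    rintro z ⟨h1, h2⟩
    obtain ⟨a, c, b, ha, hc, hb, k, hk, e⟩ := hk_reduce h1 h2
    have hT : hkTriG (p := p) n₁ n₂ n₃ a c b ∈ hkT 0 hi d := by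
      have := hkT_right h2 (hkK_inv hk)
      rw [e] at this
      simpa using this
    simp only [Set.mem_iUnion]
    refine ⟨(a, c, b), hF a c b ha hc hb hT, ?_⟩
    rw [e]
    simpa using hk
  refine (measure_mono hsub).trans ((measure_biUnion_finset_le _ _).trans ?_)
  simp [measure_preimage_mul, hμ]

lemma hk_count {n₁ n₂ n₃ : ℕ} (h1 : n₁ ≤ 2) (h2 : n₂ ≤ 2) (h3 : n₃ ≤ 2) (hs : n₁ + n₂ + n₃ = 3) :
    ∃ F : Finset (ℕ × ℕ × ℕ), F.card ≤ 2 * p ^ (2 + n₁ - n₃) ∧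
      ∀ a c b : ℕ, a < p ^ n₁ → c < p ^ n₁ → b < p ^ n₂ →
        (n₃ = 0 → p ∣ a) → (n₁ = 0 → p ∣ b) → (p : ℤ) ∣ a * b - c * p ^ n₂ → (a, c, b) ∈ F := by
  have hp : p.Prime := Fact.out
  let R : ℕ → Finset ℕ := Finset.range
  let D : Finset ℕ := (Finset.range p).image (fun i => p * i)
  have hD : D.card ≤ p := Finset.card_image_le.trans (by simp)
  have hDm : ∀ a, a < p ^ 2 → p ∣ a → a ∈ D := by
    rintro a ha ⟨i, rfl⟩
    refine Finset.mem_image.2 ⟨i, Finset.mem_range.2 ?_, rfl⟩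
    rw [pow_two] at ha
    exact Nat.lt_of_mul_lt_mul_left ha
  have hz : ∀ a, a < p → p ∣ a → a = 0 := fun a ha hd => Nat.eq_zero_of_dvd_of_lt hd ha
  have hpp := hp.pos
  interval_cases n₁ <;> interval_cases n₂ <;> try omega
  · -- (0,1,2)
    obtain rfl : n₃ = 2 := by omega
    refine ⟨{0} ×ˢ {0} ×ˢ {0}, by simp, fun a c b ha hc hb _ hd2 _ => ?_⟩
    have := hz b (by simpa using hb) (hd2 rfl)
    simp at *
    tauto
  · -- (0,2,1)
    obtain rfl : n₃ = 1 := by omega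
    refine ⟨{0} ×ˢ {0} ×ˢ D, ?_, fun a c b ha hc hb _ hd2 _ => ?_⟩
    · simp
      omega
    · have := hDm b hb (hd2 rfl)
      simp at *
      tauto
  · -- (1,0,2)
    obtain rfl : n₃ = 2 := by omega
    refine ⟨R p ×ˢ {0} ×ˢ {0}, ?_, fun a c b ha hc hb _ _ hd => ?_⟩
    · simp [R]
      omega
    · obtain rfl : b = 0 := by simpa using hb
      have hd' : p ∣ c := by
        have : (p : ℤ) ∣ c := by simpa using hd
        exact_mod_cast this
      have := hz c (by simpa using hc) hd'
      simp [R] at *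
      tauto
  · -- (1,1,1)
    obtain rfl : n₃ = 1 := by omega
    refine ⟨{0} ×ˢ R p ×ˢ R p ∪ R p ×ˢ R p ×ˢ {0}, ?_, fun a c b ha hc hb _ _ hd => ?_⟩
    · refine (Finset.card_union_le _ _).trans (le_of_eq ?_)
      simp [R]
      ring
    · have h4 : (p : ℤ) ∣ a * b := by
        have h5 : (p : ℤ) ∣ c * p ^ 1 := by simp
        have := dvd_add hd h5
        simpa using this
      have h5 : p ∣ a * b := by exact_mod_cast h4
      rw [pow_one] at ha hb hc
      rcases hp.dvd_mul.1 h5 with h | h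
      · have := hz a ha h
        simp [R]
        tauto
      · have := hz b hb h
        simp [R]
        tauto
  · -- (1,2,0)
    obtain rfl : n₃ = 0 := by omega
    refine ⟨{0} ×ˢ R p ×ˢ R (p ^ 2), ?_, fun a c b ha hc hb hd _ _ => ?_⟩
    · simp [R]
      ring_nf
      omega
    · have := hz a (by simpa using ha) (hd rfl)
      simp [R] at *
      tauto
  · -- (2,0,1)
    obtain rfl : n₃ = 1 := by omega
    refine ⟨R (p ^ 2) ×ˢ D ×ˢ {0}, ?_, fun a c b ha hc hb _ _ hd => ?_⟩
    · simp [R]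
      nlinarith [Nat.mul_le_mul_left (p ^ 2) hD]
    · obtain rfl : b = 0 := by simpa using hb
      have hd' : p ∣ c := by
        have : (p : ℤ) ∣ c := by simpa using hd
        exact_mod_cast this
      have := hDm c hc hd'
      simp [R] at *
      tauto
  · -- (2,1,0)
    obtain rfl : n₃ = 0 := by omega
    refine ⟨D ×ˢ R (p ^ 2) ×ˢ R p, ?_, fun a c b ha hc hb hd _ _ => ?_⟩
    · simp [R]
      nlinarith [Nat.mul_le_mul_right (p ^ 2 * p) hD]
    · have := hDm a ha (hd rfl)
      simp [R] at *
      tauto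

lemma hk_meas2 (μ : Measure (GL (Fin 3) ℚ_[p])) [μ.IsHaarMeasure] (hμ : μ (padicK p) = 1)
    (f₁ f₂ f₃ : ℤ) :
    μ (hkA f₁ f₂ f₃ ∩ hkT 0 2 3) ≤ ENNReal.ofReal (2 * (p : ℝ) ^ (2 + f₁ - f₃)) := by
  rcases (hkA f₁ f₂ f₃ ∩ hkT (p := p) 0 2 3).eq_empty_or_nonempty with h | ⟨z, hz1, hz2⟩
  · rw [h]; simp
  obtain ⟨⟨a1, a2, a3⟩, ⟨b1, b2, b3⟩, hs⟩ := hkA_bounds hz1 hz2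
  lift f₁ to ℕ using a1
  lift f₂ to ℕ using a2
  lift f₃ to ℕ using a3
  obtain ⟨F, hF, hF'⟩ := hk_count (p := p) (n₁ := f₁) (n₂ := f₂) (n₃ := f₃) (by omega) (by omega)
    (by omega) (by omega)
  refine (hk_cover μ hμ F ?_).trans ?_
  · intro a c b ha hc hb hT
    obtain ⟨c1, c2, c3⟩ := hk_cond hT
    exact hF' a c b ha hc hb c1 c2 c3
  · rw [← ENNReal.ofReal_natCast]
    apply ENNReal.ofReal_le_ofReal
    have e : (2 + f₁ - f₃ : ℤ) = ((2 + f₁ - f₃ : ℕ) : ℤ) := by omega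
    rw [e, zpow_natCast]
    exact_mod_cast hF

lemma hk_meas1 (μ : Measure (GL (Fin 3) ℚ_[p])) [μ.IsHaarMeasure] (hμ : μ (padicK p) = 1)
    (f₁ f₂ f₃ : ℤ) :
    μ (hkA f₁ f₂ f₃ ∩ hkT 0 1 1) ≤ ENNReal.ofReal (2 * (p : ℝ) ^ (1 + f₁ - f₃)) := by
  rcases (hkA f₁ f₂ f₃ ∩ hkT (p := p) 0 1 1).eq_empty_or_nonempty with h | ⟨z, hz1, hz2⟩
  · rw [h]; simp
  obtain ⟨⟨a1, a2, a3⟩, ⟨b1, b2, b3⟩, hs⟩ := hkA_bounds hz1 hz2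
  lift f₁ to ℕ using a1
  lift f₂ to ℕ using a2
  lift f₃ to ℕ using a3
  refine (hk_cover μ hμ
    (Finset.range (p ^ f₁) ×ˢ Finset.range (p ^ f₁) ×ˢ Finset.range (p ^ f₂)) ?_).trans ?_
  · intro a c b ha hc hb hT
    simp [ha, hc, hb]
  · rw [← ENNReal.ofReal_natCast]
    apply ENNReal.ofReal_le_ofReal
    have e : (1 + f₁ - f₃ : ℤ) = ((f₁ + (f₁ + f₂) : ℕ) : ℤ) := by omega
    rw [e, zpow_natCast]
    simp only [Finset.card_product, Finset.card_range]
    push_cast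
    rw [← pow_add, ← pow_add]
    have : (0 : ℝ) < (p : ℝ) ^ (f₁ + (f₁ + f₂)) := pow_pos (hk_pos p) _
    linarith

/-- The weights. -/
def hkW (hi d : ℤ) : Finset (ℤ × ℤ × ℤ) :=
  (Finset.Icc 0 hi ×ˢ Finset.Icc 0 hi ×ˢ Finset.Icc 0 hi).filter
    (fun e => e.1 + e.2.1 + e.2.2 = d)

lemma hk_inter (μ : Measure (GL (Fin 3) ℚ_[p]))
    {hi d hi' d' : ℤ} (hm : ∀ f₁ f₂ f₃ : ℤ, μ (hkA f₁ f₂ f₃ ∩ hkT 0 hi' d') ≤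
      ENNReal.ofReal (2 * (p : ℝ) ^ (hi' + f₁ - f₃))) [μ.IsHaarMeasure] (a b c : ℤ) :
    μ (hkT 0 hi d ∩ (fun y => (padicDiag p a b c)⁻¹ * y) ⁻¹' hkT 0 hi' d') ≤
      ENNReal.ofReal ((hkW hi d).card * (2 * (p : ℝ) ^ (hi + hi' + (c - a)))) := by
  set x := padicDiag p a b c with hx
  have hsub : hkT 0 hi d ∩ (fun y => x⁻¹ * y) ⁻¹' hkT 0 hi' d' ⊆ ⋃ e ∈ hkW hi d,
      (fun y => x⁻¹ * y) ⁻¹' (hkA (e.1 - a) (e.2.1 - b) (e.2.2 - c) ∩ hkT 0 hi' d') := by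
    rintro y ⟨h1, h2⟩
    obtain ⟨e₁, e₂, e₃, hA⟩ := hkA_exists y
    obtain ⟨⟨a1, a2, a3⟩, ⟨b1, b2, b3⟩, hs⟩ := hkA_bounds hA h1
    simp only [Set.mem_iUnion]
    refine ⟨(e₁, e₂, e₃), ?_, ?_⟩
    · simp only [hkW, Finset.mem_filter, Finset.mem_product, Finset.mem_Icc]
      exact ⟨⟨⟨a1, b1⟩, ⟨a2, b2⟩, a3, b3⟩, hs⟩
    · exact ⟨hkA_diag hA, h2⟩
  refine (measure_mono hsub).trans ((measure_biUnion_finset_le _ _).trans ?_)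
  have hle : ∀ e ∈ hkW hi d,
      μ ((fun y => x⁻¹ * y) ⁻¹' (hkA (e.1 - a) (e.2.1 - b) (e.2.2 - c) ∩ hkT 0 hi' d')) ≤
        ENNReal.ofReal (2 * (p : ℝ) ^ (hi + hi' + (c - a))) := by
    intro e he
    rw [measure_preimage_mul]
    refine (hm _ _ _).trans (ENNReal.ofReal_le_ofReal ?_)
    simp only [hkW, Finset.mem_filter, Finset.mem_product, Finset.mem_Icc] at he
    have := zpow_le_zpow_right₀ (hk_one_lt p).le
      (show hi' + (e.1 - a) - (e.2.2 - c) ≤ hi + hi' + (c - a) by omega)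
    linarith
  refine (Finset.sum_le_sum hle).trans (le_of_eq ?_)
  rw [Finset.sum_const, nsmul_eq_mul,
    ENNReal.ofReal_mul (p := ((hkW hi d).card : ℝ)) (Nat.cast_nonneg _), ENNReal.ofReal_natCast]

lemma hkT_meas (lo hi d : ℤ) : MeasurableSet (hkT (p := p) lo hi d) := by
  apply IsClosed.measurableSet
  have e : hkT (p := p) lo hi d = (⋂ i, ⋂ j, {g | ‖g.1 i j‖ ≤ (p : ℝ) ^ (-lo)}) ∩
      ((⋂ i, ⋂ j, {g | ‖(g⁻¹).1 i j‖ ≤ (p : ℝ) ^ hi}) ∩ {g | ‖g.1.det‖ = (p : ℝ) ^ (-d)}) := by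
    ext g
    simp [hkT, hkBd]
  have c1 : Continuous (fun g : GL (Fin 3) ℚ_[p] => g.1) := Units.continuous_val
  have c2 : Continuous (fun g : GL (Fin 3) ℚ_[p] => (g⁻¹).1) :=
    Units.continuous_val.comp continuous_inv
  rw [e]
  refine IsClosed.inter ?_ (IsClosed.inter ?_ ?_)
  · exact isClosed_iInter fun i => isClosed_iInter fun j =>
      isClosed_le (c1.matrix_elem i j).norm continuous_const
  · exact isClosed_iInter fun i => isClosed_iInter fun j =>
      isClosed_le (c2.matrix_elem i j).norm continuous_const
  · exact isClosed_eq c1.matrix_det.norm continuous_const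

lemma hkPhi_nonneg (a b c : ℤ) (g : GL (Fin 3) ℚ_[p]) : 0 ≤ padicPhi p a b c g :=
  Set.indicator_nonneg (fun _ _ => zero_le_one) _

lemma hkPhi_le {a b c : ℤ} {S : Set (GL (Fin 3) ℚ_[p])} {g y : GL (Fin 3) ℚ_[p]}
    (h : g ∈ padicDoubleCoset p a b c → y ∈ S) :
    padicPhi p a b c g ≤ S.indicator (fun _ => (1 : ℝ)) y := by
  by_cases hg : g ∈ padicDoubleCoset p a b c
  · rw [padicPhi, Set.indicator_of_mem hg, Set.indicator_of_mem (h hg)]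
  · rw [padicPhi, Set.indicator_of_notMem hg]
    exact Set.indicator_nonneg (fun _ _ => zero_le_one) _

lemma hkBig_nonneg (g : GL (Fin 3) ℚ_[p]) : 0 ≤ padicBigPhi p g := by
  have hp := (hk_pos p).le
  unfold padicBigPhi
  refine add_nonneg (mul_nonneg ?_ (hkPhi_nonneg _ _ _ _)) (mul_nonneg ?_ (hkPhi_nonneg _ _ _ _))
  · exact inv_nonneg.2 hp
  · exact inv_nonneg.2 (pow_nonneg hp 2)

lemma hkStar_nonneg (g : GL (Fin 3) ℚ_[p]) : 0 ≤ padicBigPhiStar p g := by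
  have hp := (hk_pos p).le
  unfold padicBigPhiStar
  refine add_nonneg (mul_nonneg ?_ (hkPhi_nonneg _ _ _ _)) (mul_nonneg ?_ (hkPhi_nonneg _ _ _ _))
  · exact inv_nonneg.2 hp
  · exact inv_nonneg.2 (pow_nonneg hp 2)

lemma hk_dc1 {y : GL (Fin 3) ℚ_[p]} (h : y ∈ padicDoubleCoset p 1 0 0) : y ∈ hkT 0 1 1 := by
  simpa using hkdc_sub (by norm_num) (by norm_num) h

lemma hk_dc2 {y : GL (Fin 3) ℚ_[p]} (h : y ∈ padicDoubleCoset p 2 1 0) : y ∈ hkT 0 2 3 := by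
  simpa using hkdc_sub (by norm_num) (by norm_num) h

lemma hk_dc3 {y : GL (Fin 3) ℚ_[p]} (h : y ∈ padicDoubleCoset p 0 0 (-1)) :
    y⁻¹ ∈ hkT 0 1 1 := by
  simpa using hkT_inv (hkdc_sub (by norm_num) (by norm_num) h)

lemma hk_dc4 {y : GL (Fin 3) ℚ_[p]} (h : y ∈ padicDoubleCoset p 0 (-1) (-2)) :
    y⁻¹ ∈ hkT 0 2 3 := by
  simpa using hkT_inv (hkdc_sub (by norm_num) (by norm_num) h)

lemma hk_upper (μ : Measure (GL (Fin 3) ℚ_[p])) [μ.IsHaarMeasure] (hμ : μ (padicK p) = 1)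
    (a b c : ℤ) :
    padicConv p μ (padicBigPhi p) (padicBigPhiStar p) (padicDiag p a b c) ≤
      121 * (p : ℝ) ^ (c - a) := by
  have hp := hk_pos p
  set x := padicDiag p a b c with hx
  let S₁ : Set (GL (Fin 3) ℚ_[p]) := hkT 0 1 1
  let S₂ : Set (GL (Fin 3) ℚ_[p]) := hkT 0 2 3
  let R₁ : Set (GL (Fin 3) ℚ_[p]) := (fun y => x⁻¹ * y) ⁻¹' hkT 0 1 1
  let R₂ : Set (GL (Fin 3) ℚ_[p]) := (fun y => x⁻¹ * y) ⁻¹' hkT 0 2 3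
  let I : Set (GL (Fin 3) ℚ_[p]) → GL (Fin 3) ℚ_[p] → ℝ := fun S => S.indicator (fun _ => (1 : ℝ))
  have w1 : (hkW 1 1).card = 3 := by decide
  have w2 : (hkW 2 3).card = 7 := by decide
  have m11 := hk_inter (hi := 1) (d := 1) μ (hk_meas1 μ hμ) a b c
  have m12 := hk_inter (hi := 1) (d := 1) μ (hk_meas2 μ hμ) a b c
  have m21 := hk_inter (hi := 2) (d := 3) μ (hk_meas1 μ hμ) a b c
  have m22 := hk_inter (hi := 2) (d := 3) μ (hk_meas2 μ hμ) a b c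
  rw [w1] at m11 m12
  rw [w2] at m21 m22
  have mS₁ : MeasurableSet S₁ := hkT_meas _ _ _
  have mS₂ : MeasurableSet S₂ := hkT_meas _ _ _
  have mR₁ : MeasurableSet R₁ := measurable_const_mul x⁻¹ (hkT_meas _ _ _)
  have mR₂ : MeasurableSet R₂ := measurable_const_mul x⁻¹ (hkT_meas _ _ _)
  have gen : ∀ (S : Set (GL (Fin 3) ℚ_[p])) (r : ℝ), 0 ≤ r → MeasurableSet S →
      μ S ≤ ENNReal.ofReal r → Integrable (I S) μ ∧ ∫ y, I S y ∂μ ≤ r := by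
    intro S r hr hS hle
    have hfin : μ S < ⊤ := hle.trans_lt ENNReal.ofReal_lt_top
    refine ⟨(integrable_indicator_iff hS).2 (integrableOn_const hfin.ne), ?_⟩
    rw [integral_indicator hS, setIntegral_const, smul_eq_mul, mul_one]
    exact ENNReal.toReal_le_of_le_ofReal hr hle
  obtain ⟨i11, l11⟩ := gen (S₁ ∩ R₁) _ (by positivity) (mS₁.inter mR₁) m11
  obtain ⟨i12, l12⟩ := gen (S₁ ∩ R₂) _ (by positivity) (mS₁.inter mR₂) m12
  obtain ⟨i21, l21⟩ := gen (S₂ ∩ R₁) _ (by positivity) (mS₂.inter mR₁) m21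
  obtain ⟨i22, l22⟩ := gen (S₂ ∩ R₂) _ (by positivity) (mS₂.inter mR₂) m22
  set q : ℝ := (p : ℝ)⁻¹ with hq
  have hqpos : 0 < q := inv_pos.2 hp
  have hq2 : ((p : ℝ) ^ 2)⁻¹ = q ^ 2 := by rw [hq, inv_pow]
  have hmulI : ∀ S R : Set (GL (Fin 3) ℚ_[p]), ∀ y, I (S ∩ R) y = I S y * I R y := by
    intro S R y
    simp only [I]
    by_cases h1 : y ∈ S <;> by_cases h2 : y ∈ R <;> simp [h1, h2]
  have hInn : ∀ S : Set (GL (Fin 3) ℚ_[p]), ∀ y, 0 ≤ I S y := fun S y =>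
    Set.indicator_nonneg (fun _ _ => zero_le_one) _
  have hF : ∀ y, padicBigPhi p y * padicBigPhiStar p (y⁻¹ * x) ≤
      q ^ 2 * I (S₁ ∩ R₁) y + q ^ 3 * I (S₁ ∩ R₂) y + q ^ 3 * I (S₂ ∩ R₁) y +
        q ^ 4 * I (S₂ ∩ R₂) y := by
    intro y
    have e1 : padicBigPhi p y ≤ q * I S₁ y + q ^ 2 * I S₂ y := by
      unfold padicBigPhi
      rw [hq2]
      gcongr
      · exact hkPhi_le hk_dc1
      · exact hkPhi_le hk_dc2
    have e2 : padicBigPhiStar p (y⁻¹ * x) ≤ q * I R₁ y + q ^ 2 * I R₂ y := by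
      unfold padicBigPhiStar
      rw [hq2]
      gcongr
      · exact hkPhi_le fun h => by simpa [R₁] using hk_dc3 h
      · exact hkPhi_le fun h => by simpa [R₂] using hk_dc4 h
    refine (mul_le_mul e1 e2 (hkStar_nonneg _) ((hkBig_nonneg y).trans e1)).trans (le_of_eq ?_)
    simp only [hmulI]
    ring
  have j2 : Integrable (fun y => q ^ 2 * I (S₁ ∩ R₁) y + q ^ 3 * I (S₁ ∩ R₂) y) μ :=
    (i11.const_mul _).add (i12.const_mul _)
  have j3 : Integrable (fun y => q ^ 2 * I (S₁ ∩ R₁) y + q ^ 3 * I (S₁ ∩ R₂) y +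
      q ^ 3 * I (S₂ ∩ R₁) y) μ := j2.add (i21.const_mul _)
  have hle : padicConv p μ (padicBigPhi p) (padicBigPhiStar p) x ≤
      ∫ y, (q ^ 2 * I (S₁ ∩ R₁) y + q ^ 3 * I (S₁ ∩ R₂) y + q ^ 3 * I (S₂ ∩ R₁) y +
        q ^ 4 * I (S₂ ∩ R₂) y) ∂μ := by
    refine integral_mono_of_nonneg (Filter.Eventually.of_forall fun y =>
      mul_nonneg (hkBig_nonneg _) (hkStar_nonneg _)) ?_ (Filter.Eventually.of_forall hF)
    exact j3.add (i22.const_mul _)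
  refine hle.trans ?_
  rw [integral_add j3 (i22.const_mul _), integral_add j2 (i21.const_mul _),
    integral_add (i11.const_mul _) (i12.const_mul _), integral_const_mul, integral_const_mul,
    integral_const_mul, integral_const_mul]
  have hqp : q * p = 1 := inv_mul_cancel₀ hp.ne'
  set P : ℝ := (p : ℝ) ^ (c - a) with hP
  have hPpos : 0 < P := zpow_pos hp _
  have z2 : (p : ℝ) ^ ((1 : ℤ) + 1 + (c - a)) = (p : ℝ) ^ 2 * P := by
    rw [zpow_add₀ hp.ne']; norm_cast
  have z3 : (p : ℝ) ^ ((1 : ℤ) + 2 + (c - a)) = (p : ℝ) ^ 3 * P := by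
    rw [zpow_add₀ hp.ne']; norm_cast
  have z3' : (p : ℝ) ^ ((2 : ℤ) + 1 + (c - a)) = (p : ℝ) ^ 3 * P := by
    rw [zpow_add₀ hp.ne']; norm_cast
  have z4 : (p : ℝ) ^ ((2 : ℤ) + 2 + (c - a)) = (p : ℝ) ^ 4 * P := by
    rw [zpow_add₀ hp.ne']; norm_cast
  rw [z2] at l11
  rw [z3] at l12
  rw [z3'] at l21
  rw [z4] at l22
  have pw : ∀ (n : ℕ) (J m : ℝ), J ≤ m * (2 * ((p : ℝ) ^ n * P)) → q ^ n * J ≤ m * 2 * P := by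
    intro n J m h
    calc q ^ n * J ≤ q ^ n * (m * (2 * ((p : ℝ) ^ n * P))) := by gcongr
      _ = (q * p) ^ n * (m * 2 * P) := by rw [mul_pow]; ring
      _ = m * 2 * P := by rw [hqp, one_pow, one_mul]
  have t1 := pw 2 _ _ l11
  have t2 := pw 3 _ _ l12
  have t3 := pw 3 _ _ l21
  have t4 := pw 4 _ _ l22
  push_cast at t1 t2 t3 t4
  linarith

lemma hkdc_left {a b c : ℤ} {k g : GL (Fin 3) ℚ_[p]} (hk : k ∈ padicK p) :
    k * g ∈ padicDoubleCoset p a b c ↔ g ∈ padicDoubleCoset p a b c := by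
  constructor
  · rintro ⟨k₁, h1, k₂, h2, e⟩
    refine ⟨k⁻¹ * k₁, hkK_mul (hkK_inv hk) h1, k₂, h2, ?_⟩
    rw [mul_assoc, mul_assoc, ← mul_assoc k₁, ← e]
    group
  · rintro ⟨k₁, h1, k₂, h2, rfl⟩
    exact ⟨k * k₁, hkK_mul hk h1, k₂, h2, by group⟩

lemma hkdc_right {a b c : ℤ} {k g : GL (Fin 3) ℚ_[p]} (hk : k ∈ padicK p) :
    g * k ∈ padicDoubleCoset p a b c ↔ g ∈ padicDoubleCoset p a b c := by
  constructor
  · rintro ⟨k₁, h1, k₂, h2, e⟩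
    refine ⟨k₁, h1, k₂ * k⁻¹, hkK_mul h2 (hkK_inv hk), ?_⟩
    rw [← mul_assoc, ← e]
    group
  · rintro ⟨k₁, h1, k₂, h2, rfl⟩
    exact ⟨k₁, h1, k₂ * k, hkK_mul h2 hk, by group⟩

lemma hkPhi_left {a b c : ℤ} {k g : GL (Fin 3) ℚ_[p]} (hk : k ∈ padicK p) :
    padicPhi p a b c (k * g) = padicPhi p a b c g := by
  classical
  simp only [padicPhi, Set.indicator_apply, hkdc_left hk]

lemma hkPhi_right {a b c : ℤ} {k g : GL (Fin 3) ℚ_[p]} (hk : k ∈ padicK p) :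
    padicPhi p a b c (g * k) = padicPhi p a b c g := by
  classical
  simp only [padicPhi, Set.indicator_apply, hkdc_right hk]

lemma hkConv_inv (μ : Measure (GL (Fin 3) ℚ_[p])) [μ.IsHaarMeasure]
    {x k l : GL (Fin 3) ℚ_[p]} (hk : k ∈ padicK p) (hl : l ∈ padicK p) :
    padicConv p μ (padicBigPhi p) (padicBigPhiStar p) (k * x * l) =
      padicConv p μ (padicBigPhi p) (padicBigPhiStar p) x := by
  unfold padicConv
  rw [← integral_mul_left_eq_self _ k]
  congr 1
  ext y
  have e : (k * y)⁻¹ * (k * x * l) = y⁻¹ * x * l := by group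
  rw [e]
  simp only [padicBigPhi, padicBigPhiStar, hkPhi_left hk, hkPhi_right hl]

lemma hkdiag_dc (a b c : ℤ) : padicDiag p a b c ∈ padicDoubleCoset p a b c :=
  ⟨1, hkK_one, 1, hkK_one, by simp⟩

lemma hkdc_unique {a b c a' b' c' : ℤ} (h1 : c ≤ b) (h2 : b ≤ a) (h1' : c' ≤ b') (h2' : b' ≤ a')
    {x : GL (Fin 3) ℚ_[p]} (hx : x ∈ padicDoubleCoset p a b c)
    (hx' : x ∈ padicDoubleCoset p a' b' c') : (a, b, c) = (a', b', c') := by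
  have e1 : padicDiag p a b c ∈ padicDoubleCoset p a' b' c' := by
    obtain ⟨k, hk, l, hl, rfl⟩ := hx
    rwa [hkdc_right hl, hkdc_left hk] at hx'
  have e2 : padicDiag p a' b' c' ∈ padicDoubleCoset p a b c := by
    obtain ⟨k, hk, l, hl, rfl⟩ := hx'
    rwa [hkdc_right hl, hkdc_left hk] at hx
  have b1 := hkdiag_bounds (hkdc_sub h1' h2' e1)
  have b2 := hkdiag_bounds (hkdc_sub h1 h2 e2)
  simp only [Prod.mk.injEq]
  omega

lemma hk_support (μ : Measure (GL (Fin 3) ℚ_[p])) {a b c : ℤ} (h1 : c ≤ b) (h2 : b ≤ a)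
    (h : padicConv p μ (padicBigPhi p) (padicBigPhiStar p) (padicDiag p a b c) ≠ 0) :
    (a + b + c = 2 ∧ -1 ≤ c ∧ c ≤ b ∧ b ≤ a ∧ a ≤ 2) ∨
    (a + b + c = 0 ∧ -2 ≤ c ∧ c ≤ b ∧ b ≤ a ∧ a ≤ 2) ∨
    (a + b + c = -2 ∧ -2 ≤ c ∧ c ≤ b ∧ b ≤ a ∧ a ≤ 1) := by
  have hex : ∃ y, padicBigPhi p y ≠ 0 ∧ padicBigPhiStar p (y⁻¹ * padicDiag p a b c) ≠ 0 := by
    by_contra! hcon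
    apply h
    unfold padicConv
    have : ∀ y, padicBigPhi p y * padicBigPhiStar p (y⁻¹ * padicDiag p a b c) = 0 := by
      intro y
      by_cases hy : padicBigPhi p y = 0
      · rw [hy, zero_mul]
      · rw [hcon y hy, mul_zero]
    simp [this]
  obtain ⟨y, hy1, hy2⟩ := hex
  have c1 : y ∈ hkT 0 1 1 ∨ y ∈ hkT 0 2 3 := by
    by_contra! hcon
    apply hy1
    unfold padicBigPhi padicPhi
    rw [Set.indicator_of_notMem (fun hm => hcon.1 (hk_dc1 hm)),
      Set.indicator_of_notMem (fun hm => hcon.2 (hk_dc2 hm))]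
    simp
  have c2 : (y⁻¹ * padicDiag p a b c) ∈ hkT (-1) 0 (-1) ∨
      (y⁻¹ * padicDiag p a b c) ∈ hkT (-2) 0 (-3) := by
    by_contra! hcon
    apply hy2
    unfold padicBigPhiStar padicPhi
    rw [Set.indicator_of_notMem (fun hm => hcon.1 (by simpa using hkT_inv (hk_dc3 hm))),
      Set.indicator_of_notMem (fun hm => hcon.2 (by simpa using hkT_inv (hk_dc4 hm)))]
    simp
  rcases c1 with c1 | c1 <;> rcases c2 with c2 | c2 <;>
  · have hm := hkT_mul c1 c2
    rw [mul_inv_cancel_left] at hm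
    have := hkdiag_bounds hm
    omega

lemma hk_sum_eval (β : ℤ × ℤ × ℤ →₀ ℝ) (hβ : ∀ t ∈ β.support, t.2.2 ≤ t.2.1 ∧ t.2.1 ≤ t.1)
    {a b c : ℤ} (h1 : c ≤ b) (h2 : b ≤ a) {x : GL (Fin 3) ℚ_[p]}
    (hx : x ∈ padicDoubleCoset p a b c) :
    (β.sum fun t r => r * padicPhi p t.1 t.2.1 t.2.2 x) = β (a, b, c) := by
  rw [Finsupp.sum, Finset.sum_eq_single (a, b, c)]
  · simp [padicPhi, hx]
  · rintro ⟨a', b', c'⟩ ht hne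
    obtain ⟨h1', h2'⟩ := hβ _ ht
    have : x ∉ padicDoubleCoset p a' b' c' := fun hx' =>
      hne (hkdc_unique h1' h2' h1 h2 hx' hx)
    simp [padicPhi, this]
  · intro hn
    rw [Finsupp.notMem_support_iff.1 hn, zero_mul]

variable (p)

/-- `Φ * Φ^*` has a unique expansion `Σ_{a ≥ b ≥ c} β(a,b,c) Φ_p(a,b,c)`,
with `β(a,b,c) ≥ 0`, support satisfying one of the three pairs of inequalities, and
`β(a,b,c) ≤ 121·p^{c−a}`. -/
theorem statement3 (μ : Measure (GL (Fin 3) ℚ_[p])) [μ.IsHaarMeasure]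
    (hμ : μ (padicK p) = 1) :
    ∃ β : ℤ × ℤ × ℤ →₀ ℝ,
      IsHeckeExpansion p μ β ∧
      (∀ β' : ℤ × ℤ × ℤ →₀ ℝ, IsHeckeExpansion p μ β' → β' = β) ∧
      (∀ t, 0 ≤ β t) ∧
      (∀ a b c : ℤ, β (a, b, c) ≠ 0 →
        (a + b + c = 2 ∧ -1 ≤ c ∧ c ≤ b ∧ b ≤ a ∧ a ≤ 2) ∨
        (a + b + c = 0 ∧ -2 ≤ c ∧ c ≤ b ∧ b ≤ a ∧ a ≤ 2) ∨
        (a + b + c = -2 ∧ -2 ≤ c ∧ c ≤ b ∧ b ≤ a ∧ a ≤ 1)) ∧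
      (∀ a b c : ℤ, β (a, b, c) ≤ 121 * (p : ℝ) ^ (c - a)) := by
  classical
  set C := padicConv p μ (padicBigPhi p) (padicBigPhiStar p) with hC
  let val : ℤ × ℤ × ℤ → ℝ := fun t =>
    if t.2.2 ≤ t.2.1 ∧ t.2.1 ≤ t.1 then C (padicDiag p t.1 t.2.1 t.2.2) else 0
  have hval : ∀ a b c : ℤ, c ≤ b → b ≤ a → val (a, b, c) = C (padicDiag p a b c) :=
    fun a b c h1 h2 => if_pos ⟨h1, h2⟩
  have hsupp : ∀ a b c : ℤ, val (a, b, c) ≠ 0 → (c ≤ b ∧ b ≤ a) ∧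
      ((a + b + c = 2 ∧ -1 ≤ c ∧ c ≤ b ∧ b ≤ a ∧ a ≤ 2) ∨
        (a + b + c = 0 ∧ -2 ≤ c ∧ c ≤ b ∧ b ≤ a ∧ a ≤ 2) ∨
        (a + b + c = -2 ∧ -2 ≤ c ∧ c ≤ b ∧ b ≤ a ∧ a ≤ 1)) := by
    intro a b c h
    by_cases hd : c ≤ b ∧ b ≤ a
    · refine ⟨hd, hk_support μ hd.1 hd.2 ?_⟩
      rwa [hval a b c hd.1 hd.2] at h
    · exact absurd (if_neg hd) h
  let β : ℤ × ℤ × ℤ →₀ ℝ := Finsupp.onFinset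
    (Finset.Icc (-2) 2 ×ˢ Finset.Icc (-2) 2 ×ˢ Finset.Icc (-2) 2) val (by
      rintro ⟨a, b, c⟩ h
      have := hsupp a b c h
      simp only [Finset.mem_product, Finset.mem_Icc]
      omega)
  have hβ : ∀ t, β t = val t := fun t => rfl
  have hβd : ∀ t ∈ β.support, t.2.2 ≤ t.2.1 ∧ t.2.1 ≤ t.1 := by
    rintro ⟨a, b, c⟩ ht
    exact (hsupp a b c (Finsupp.mem_support_iff.1 ht)).1
  refine ⟨β, ⟨hβd, ?_⟩, ?_, ?_, ?_, ?_⟩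
  · intro x
    obtain ⟨a, b, c, h1, h2, hx⟩ := hk_cartan x
    rw [hk_sum_eval β hβd h1 h2 hx, hβ, hval a b c h1 h2]
    obtain ⟨k, hk, l, hl, rfl⟩ := hx
    exact hkConv_inv μ hk hl
  · rintro β' ⟨hd', he'⟩
    ext ⟨a, b, c⟩
    by_cases hd : c ≤ b ∧ b ≤ a
    · have := he' (padicDiag p a b c)
      rw [hk_sum_eval β' hd' hd.1 hd.2 (hkdiag_dc a b c)] at this
      rw [← this, hβ, hval a b c hd.1 hd.2]
    · have h1 : β' (a, b, c) = 0 := by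
        by_contra hne
        exact hd (hd' _ (Finsupp.mem_support_iff.2 hne))
      have h2 : β (a, b, c) = 0 := by
        by_contra hne
        exact hd (hβd _ (Finsupp.mem_support_iff.2 hne))
      rw [h1, h2]
  · intro t
    rw [hβ]
    simp only [val]
    split_ifs
    · exact integral_nonneg fun y => mul_nonneg (hkBig_nonneg _) (hkStar_nonneg _)
    · exact le_rfl
  · intro a b c h
    exact (hsupp a b c h).2
  · intro a b c
    rw [hβ]
    by_cases hd : c ≤ b ∧ b ≤ a
    · rw [hval a b c hd.1 hd.2]
      exact hk_upper μ hμ a b c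
    · have h0 : val (a, b, c) = 0 := if_neg hd
      rw [h0]
      have := hk_pos p
      positivity

end
end
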